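/- arXiv:2509.20167 — 2 statements merged into one kernel-verified Lean document; each statement's English description precedes it below -/
import Mathlib

section
/- Let f, g : ℂ → ℂ be continuous functions with no common zeros. Assume that f(z)/g(z) → ∞ as |z| → ∞, and that there is a constant M > 0 such that f(z) ≠ 0 for all |z| ≥ M. Define R : ℂ̄ → ℂ̄ by R(z) = f(z)/g(z) if g(z) ≠ 0, R(z) = ∞ if g(z) = 0, and R(∞) = ∞, and assume R is continuous. Then the degree of the map R equals the winding number about 0 of the loop φ ↦ f(M·e^{iφ}), φ ∈ [0, 2π]. -/
open Complex Topology unitInterval Filter OnePoint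
open scoped OnePoint

/-- The standard map of degree `n` on the Riemann sphere `ℂ̄ = ℂ ∪ {∞}`
(identified with `S²` via stereographic projection): for `n > 0` it is `z ↦ zⁿ`,
for `n = 0` the constant map `1`, and for `n < 0` it is `z ↦ (conj z)^(-n)`,
each sending `∞ ↦ ∞` (for `n ≠ 0`). -/
noncomputable def stdSphereMap (n : ℤ) : OnePoint ℂ → OnePoint ℂ := fun z =>
  OnePoint.rec (if n = 0 then ((1 : ℂ) : OnePoint ℂ) else (∞ : OnePoint ℂ))
    (fun w =>
      if n = 0 then ((1 : ℂ) : OnePoint ℂ)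
      else if 0 < n then ((w ^ n.toNat : ℂ) : OnePoint ℂ)
      else (((starRingEnd ℂ) w ^ (-n).toNat : ℂ) : OnePoint ℂ)) z

/-- `R : ℂ̄ → ℂ̄` has topological degree `n`: by Hopf's theorem this holds iff `R` is
(freely) homotopic to the standard degree-`n` map; the degree is the integer corresponding
to the homotopy class of `R` under `π₂(S²) ≅ ℤ`, the identity map having degree `1`. -/
def HasDegree (R : OnePoint ℂ → OnePoint ℂ) (n : ℤ) : Prop :=
  ∃ H : OnePoint ℂ × I → OnePoint ℂ, Continuous H ∧
    (∀ z, H (z, 0) = R z) ∧ (∀ z, H (z, 1) = stdSphereMap n z)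

/-- The continuous loop `γ : [0, 2π] → ℂ \ {0}` has winding number `n` about `0`:
there is a continuous choice of argument `θ` along the loop whose total increment
is `2πn` (counterclockwise loops get positive winding numbers). -/
def IsWindingNumber (γ : ℝ → ℂ) (n : ℤ) : Prop :=
  ∃ θ : ℝ → ℝ, ContinuousOn θ (Set.Icc 0 (2 * Real.pi)) ∧
    (∀ t ∈ Set.Icc 0 (2 * Real.pi),
      γ t = (‖γ t‖ : ℂ) * Complex.exp ((θ t : ℂ) * Complex.I)) ∧
    θ (2 * Real.pi) - θ 0 = 2 * Real.pi * (n : ℝ)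


namespace DW

/-- The point of the sphere with homogeneous coordinates `q`. -/
noncomputable def mk (q : ℂ × ℂ) : OnePoint ℂ := if q.2 = 0 then ∞ else ((q.1 / q.2 : ℂ) : OnePoint ℂ)

lemma tendsto_mk_infty {α : Type*} {l : Filter α} {q : α → ℂ × ℂ}
    (h : ∀ C : ℝ, 0 < C → ∀ᶠ x in l, C * ‖(q x).2‖ ≤ ‖(q x).1‖) :
    Tendsto (fun x => mk (q x)) l (𝓝 ∞) := by
  rw [OnePoint.hasBasis_nhds_infty.tendsto_right_iff]
  rintro s ⟨-, hs⟩
  obtain ⟨C, hC⟩ := hs.isBounded.exists_norm_le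
  have hC1 : 0 < |C| + 1 := by positivity
  filter_upwards [h _ hC1] with x hx
  unfold mk
  split_ifs with h0
  · right; rfl
  · left
    refine ⟨_, ?_, rfl⟩
    intro hmem
    have h1 := hC _ hmem
    rw [norm_div, div_le_iff₀ (norm_pos_iff.2 h0)] at h1
    have h2 : 0 < ‖(q x).2‖ := norm_pos_iff.2 h0
    nlinarith [le_abs_self C]

lemma continuousAt_mk {q : ℂ × ℂ} (hq : q ≠ 0) : ContinuousAt mk q := by
  by_cases h0 : q.2 = 0
  · have h1 : q.1 ≠ 0 := fun h => hq (Prod.ext h h0)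
    have : mk q = ∞ := by simp [mk, h0]
    rw [ContinuousAt, this]
    refine tendsto_mk_infty (q := fun x => x) fun C hC => ?_
    have : ∀ᶠ x : ℂ × ℂ in 𝓝 q, C * ‖x.2‖ < ‖x.1‖ := by
      apply ContinuousAt.eventually_lt (by fun_prop) (by fun_prop)
      simpa [h0] using h1
    filter_upwards [this] with x hx using hx.le
  · have h1 : ContinuousAt (fun x : ℂ × ℂ => ((x.1 / x.2 : ℂ) : OnePoint ℂ)) q := by
      refine OnePoint.continuous_coe.continuousAt.comp (f := fun x : ℂ × ℂ => x.1 / x.2) ?_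
      exact ContinuousAt.div (by fun_prop) (by fun_prop) h0
    refine h1.congr ?_
    have : ∀ᶠ x : ℂ × ℂ in 𝓝 q, x.2 ≠ 0 :=
      (continuous_snd.continuousAt (x := q)).eventually_ne h0
    filter_upwards [this] with x hx
    simp [mk, hx]

/-- Free homotopy of self-maps of the sphere. -/
def Hty (A B : OnePoint ℂ → OnePoint ℂ) : Prop :=
  ∃ H : OnePoint ℂ × I → OnePoint ℂ, Continuous H ∧
    (∀ z, H (z, 0) = A z) ∧ (∀ z, H (z, 1) = B z)

lemma Hty.trans {A B C : OnePoint ℂ → OnePoint ℂ} (h : Hty A B) (h' : Hty B C) : Hty A C := by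
  obtain ⟨H, hc, h0, h1⟩ := h
  obtain ⟨H', hc', h0', h1'⟩ := h'
  have cA : Continuous A := by
    have : A = fun z => H (z, 0) := by ext z; rw [h0]
    rw [this]; fun_prop
  have cB : Continuous B := by
    have : B = fun z => H (z, 1) := by ext z; rw [h1]
    rw [this]; fun_prop
  have cC : Continuous C := by
    have : C = fun z => H' (z, 1) := by ext z; rw [h1']
    rw [this]; fun_prop
  let F : ContinuousMap.Homotopy (⟨A, cA⟩ : C(OnePoint ℂ, OnePoint ℂ)) ⟨B, cB⟩ :=
    { toFun := fun p => H (p.2, p.1)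
      continuous_toFun := by fun_prop
      map_zero_left := fun z => h0 z
      map_one_left := fun z => h1 z }
  let F' : ContinuousMap.Homotopy (⟨B, cB⟩ : C(OnePoint ℂ, OnePoint ℂ)) ⟨C, cC⟩ :=
    { toFun := fun p => H' (p.2, p.1)
      continuous_toFun := by fun_prop
      map_zero_left := fun z => h0' z
      map_one_left := fun z => h1' z }
  refine ⟨fun p => (F.trans F') (p.2, p.1), by fun_prop, fun z => ?_, fun z => ?_⟩
  · exact (F.trans F').map_zero_left z
  · exact (F.trans F').map_one_left z

/-- Self-map of the sphere given by homogeneous coordinates, sending `∞` to `∞`. -/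
noncomputable def sph (q : ℂ → ℂ × ℂ) (z : OnePoint ℂ) : OnePoint ℂ :=
  OnePoint.elim z ∞ (fun w => mk (q w))

@[simp] lemma sph_infty (q : ℂ → ℂ × ℂ) : sph q ∞ = ∞ := rfl
@[simp] lemma sph_coe (q : ℂ → ℂ × ℂ) (z : ℂ) : sph q (z : OnePoint ℂ) = mk (q z) := rfl

lemma hty_sph (Q : ℂ → ℝ → ℂ × ℂ) (hc : Continuous fun p : ℂ × ℝ => Q p.1 p.2)
    (hne : ∀ z t, 0 ≤ t → t ≤ 1 → Q z t ≠ 0)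
    (hgr : ∀ C : ℝ, 0 < C → ∃ r : ℝ, ∀ z t, 0 ≤ t → t ≤ 1 → r ≤ ‖z‖ →
      C * ‖(Q z t).2‖ ≤ ‖(Q z t).1‖) :
    Hty (sph fun z => Q z 0) (sph fun z => Q z 1) := by
  refine ⟨fun p => sph (fun z => Q z p.2) p.1, ?_, fun z => by simp, fun z => by simp⟩
  rw [continuous_iff_continuousAt]
  rintro ⟨z, t⟩
  induction z using OnePoint.rec with
  | infty =>
    have h1 : ∀ p : OnePoint ℂ × I, sph (fun z => Q z p.2) p.1
        = mk (OnePoint.elim p.1 (1, 0) (fun w => Q w p.2)) := by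
      rintro ⟨z, t⟩
      induction z using OnePoint.rec with
      | infty => simp [mk]
      | coe z => simp
    simp only [ContinuousAt, sph_infty]
    simp only [h1]
    refine tendsto_mk_infty fun C hC => ?_
    obtain ⟨r, hr⟩ := hgr C hC
    have h2 : ∀ᶠ z : OnePoint ℂ in 𝓝 ∞, z = ∞ ∨ ∃ w : ℂ, z = w ∧ r ≤ ‖w‖ := by
      rw [OnePoint.hasBasis_nhds_infty.eventually_iff]
      refine ⟨Metric.closedBall 0 r, ⟨Metric.isClosed_closedBall, isCompact_closedBall _ _⟩, ?_⟩
      rintro x (⟨w, hw, rfl⟩ | hx)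
      · right
        refine ⟨w, rfl, ?_⟩
        simp at hw
        exact hw.le
      · left; exact hx
    rw [nhds_prod_eq]
    filter_upwards [h2.prod_inl (𝓝 t)] with p hp
    obtain ⟨z, s⟩ := p
    rcases hp with h | ⟨w, h, hw⟩
    · simp only at h; subst h; simp
    · simp only at h; subst h
      exact hr w s s.2.1 s.2.2 hw
  | coe z =>
    have he : IsOpenEmbedding (Prod.map ((↑) : ℂ → OnePoint ℂ) (id : I → I)) :=
      OnePoint.isOpenEmbedding_coe.prodMap IsOpenEmbedding.id
    have := he.continuousAt_iff (g := fun p : OnePoint ℂ × I => sph (fun z => Q z p.2) p.1)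
      (x := (z, t))
    refine this.1 ?_
    have h3 : ((fun p : OnePoint ℂ × I => sph (fun z => Q z p.2) p.1) ∘
      (Prod.map ((↑) : ℂ → OnePoint ℂ) (id : I → I))) = fun p : ℂ × I => mk (Q p.1 p.2) := by
      ext p; simp
    rw [h3]
    have h4 : ContinuousAt (fun p : ℂ × I => Q p.1 p.2) (z, t) := by
      have : Continuous (fun p : ℂ × I => Q p.1 p.2) :=
        hc.comp (f := fun p : ℂ × I => (p.1, (p.2 : ℝ))) (by fun_prop)
      exact this.continuousAt
    exact ContinuousAt.comp (g := mk) (continuousAt_mk (hne z t t.2.1 t.2.2)) h4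

lemma exists_log (k : ℂ → ℂ) (hk : Continuous k) (h0 : ∀ z, k z ≠ 0) :
    ∃ l : ℂ → ℂ, Continuous l ∧ ∀ z, Complex.exp (l z) = k z := by
  obtain ⟨F, ⟨-, hF⟩, -⟩ := Complex.isCoveringMapOn_exp.existsUnique_continuousMap_lifts
    (⟨k, hk⟩ : C(ℂ, ℂ)) (a₀ := 0) (e₀ := Complex.log (k 0)) (Complex.exp_log (h0 0))
    (fun a => h0 a)
  exact ⟨F, F.continuous, fun z => congrFun hF z⟩


/-- The affine part of the standard map of degree `n`. -/
noncomputable def pn (n : ℤ) (z : ℂ) : ℂ :=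
  if 0 ≤ n then z ^ n.toNat else (starRingEnd ℂ) z ^ (-n).toNat

lemma pn_zero (z : ℂ) : pn 0 z = 1 := by simp [pn]

lemma pn_contDiff (n : ℤ) : ContDiff ℝ 1 (pn n) := by
  unfold pn
  split_ifs with h
  · fun_prop
  · exact (Complex.conjCLE.contDiff).pow _

lemma pn_cont (n : ℤ) : Continuous (pn n) := (pn_contDiff n).continuous

lemma pn_norm (n : ℤ) (z : ℂ) : ‖pn n z‖ = ‖z‖ ^ n.natAbs := by
  unfold pn
  split_ifs with h
  · rw [norm_pow]; congr 1; omega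
  · rw [norm_pow, RCLike.norm_conj]; congr 1; omega

lemma pn_ne (n : ℤ) {z : ℂ} (hz : z ≠ 0) : pn n z ≠ 0 := by
  rw [← norm_ne_zero_iff, pn_norm]; exact pow_ne_zero _ (norm_ne_zero_iff.2 hz)

lemma pn_exp (n : ℤ) (x y : ℝ) :
    pn n (Complex.exp (x + y * Complex.I)) =
      Complex.exp (n.natAbs * x + n * y * Complex.I) := by
  unfold pn
  split_ifs with h
  · rw [← Complex.exp_nat_mul]
    obtain ⟨k, rfl⟩ := Int.eq_ofNat_of_zero_le h
    simp; ring_nf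
  · rw [← Complex.exp_conj, ← Complex.exp_nat_mul]
    obtain ⟨k, hk⟩ : ∃ k : ℕ, n = -k := ⟨(-n).toNat, by omega⟩
    subst hk
    simp; ring_nf

lemma std_coe (n : ℤ) (z : ℂ) : stdSphereMap n (z : OnePoint ℂ) = ((pn n z : ℂ) : OnePoint ℂ) := by
  unfold pn
  change (if n = 0 then ((1 : ℂ) : OnePoint ℂ)
      else if 0 < n then ((z ^ n.toNat : ℂ) : OnePoint ℂ)
      else (((starRingEnd ℂ) z ^ (-n).toNat : ℂ) : OnePoint ℂ)) = _
  split_ifs with h1 h2 h3 h4 h5 <;> first | rfl | omega | simp_all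

lemma std_infty (n : ℤ) : stdSphereMap n ∞ =
    (if n = 0 then ((1 : ℂ) : OnePoint ℂ) else (∞ : OnePoint ℂ)) := rfl

lemma const_of_exp {X : Type*} [TopologicalSpace X] {S : Set X} (hS : IsPreconnected S)
    {d : X → ℂ} (hd : ContinuousOn d S) (h1 : ∀ x ∈ S, Complex.exp (d x) = 1) {x y : X}
    (hx : x ∈ S) (hy : y ∈ S) : d x = d y := by
  have hdisc : DiscreteTopology (Set.range ((↑) : ℤ → ℝ)) :=
    (Int.isClosedEmbedding_coe_real.isEmbedding.toHomeomorph).symm.isEmbedding.discreteTopology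
  have key : (d x).im / (2 * Real.pi) = (d y).im / (2 * Real.pi) := by
    refine hS.constant_of_mapsTo (T := Set.range ((↑) : ℤ → ℝ))
      ⟨hdisc⟩ (f := fun x => (d x).im / (2 * Real.pi)) ?_ ?_ hx hy
    · exact (Complex.continuous_im.comp_continuousOn hd).div_const _
    · intro x hx
      obtain ⟨m, hm⟩ := Complex.exp_eq_one_iff.1 (h1 x hx)
      refine ⟨m, ?_⟩
      simp only [hm]
      have := Real.pi_ne_zero
      simp
  obtain ⟨m, hm⟩ := Complex.exp_eq_one_iff.1 (h1 x hx)
  obtain ⟨k, hk⟩ := Complex.exp_eq_one_iff.1 (h1 y hy)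
  have hpi := Real.pi_ne_zero
  rw [div_left_inj' (by positivity)] at key
  apply Complex.ext
  · simp [hm, hk]
  · exact key

lemma wind_log {f : ℂ → ℂ} (hf : Continuous f) {M : ℝ} (hM : 0 < M)
    (hfM : ∀ z : ℂ, M ≤ ‖z‖ → f z ≠ 0) {n : ℤ}
    (hw : IsWindingNumber (fun φ : ℝ => f ((M : ℂ) * Complex.exp ((φ : ℂ) * Complex.I))) n) :
    ∃ L : ℂ → ℂ, (∀ z, z ≠ 0 → ContinuousAt L z) ∧
      ∀ z, M ≤ ‖z‖ → f z = pn n z * Complex.exp (L z) := by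
  obtain ⟨θ, hθ, hγ, hinc⟩ := hw
  set w : ℂ → ℂ := fun ζ => ((max ζ.re (Real.log M) : ℝ) : ℂ) + (ζ.im : ℂ) * Complex.I with hwdef
  have hwc : Continuous w := by fun_prop
  have hwM : ∀ ζ, M ≤ ‖Complex.exp (w ζ)‖ := by
    intro ζ
    rw [Complex.norm_exp]
    have : (w ζ).re = max ζ.re (Real.log M) := by simp [w]
    rw [this]
    calc M = Real.exp (Real.log M) := (Real.exp_log hM).symm
      _ ≤ _ := Real.exp_le_exp.2 (le_max_right _ _)
  have hpe : ∀ ζ, pn n (Complex.exp ζ) ≠ 0 := fun ζ => pn_ne n (Complex.exp_ne_zero _)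
  set k : ℂ → ℂ := fun ζ => f (Complex.exp (w ζ)) / pn n (Complex.exp ζ) with hk
  have hkc : Continuous k := by
    refine Continuous.div (by fun_prop) ((pn_cont n).comp Complex.continuous_exp) hpe
  have hk0 : ∀ ζ, k ζ ≠ 0 := fun ζ => div_ne_zero (hfM _ (hwM ζ)) (hpe ζ)
  obtain ⟨l, hlc, hl⟩ := exists_log k hkc hk0
  have hkper : ∀ ζ, k (ζ + 2 * Real.pi * Complex.I) = k ζ := by
    intro ζ
    have h1 : w (ζ + 2 * Real.pi * Complex.I) = w ζ + 2 * Real.pi * Complex.I := by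
      simp [w]; ring
    simp only [hk, h1, Complex.exp_periodic _]
  -- the increment of `l` vanishes at `log M`
  have hD0 : l ((Real.log M : ℝ) + 2 * Real.pi * Complex.I) - l ((Real.log M : ℝ) : ℂ) = 0 := by
    have hpi := Real.pi_pos
    set e : ℝ → ℂ := fun φ => (Real.log M : ℝ) + (φ : ℂ) * Complex.I with he
    have hexpe : ∀ φ, Complex.exp (e φ) = (M : ℂ) * Complex.exp ((φ : ℂ) * Complex.I) := by
      intro φ
      rw [he, Complex.exp_add, ← Complex.ofReal_exp, Real.exp_log hM]
    have hwe : ∀ φ, w (e φ) = e φ := by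
      intro φ; simp [w, e]
    have hfe : ∀ φ : ℝ, f (Complex.exp (e φ)) ≠ 0 := fun φ => by
      have := hfM _ (hwM (e φ)); rwa [hwe] at this
    set d : ℝ → ℂ := fun φ => l (e φ) - (((Real.log ‖f (Complex.exp (e φ))‖ -
      n.natAbs * Real.log M : ℝ) : ℂ) + ((θ φ - n * φ : ℝ) : ℂ) * Complex.I) with hd
    have hec : Continuous e := by fun_prop
    have hdc : ContinuousOn d (Set.Icc 0 (2 * Real.pi)) := by
      have c1 : Continuous fun φ => Real.log ‖f (Complex.exp (e φ))‖ :=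
        Continuous.log (by fun_prop) (fun φ => norm_ne_zero_iff.2 (hfe φ))
      have c2 : ContinuousOn (fun φ => ((θ φ - n * φ : ℝ) : ℂ)) (Set.Icc 0 (2 * Real.pi)) :=
        Complex.continuous_ofReal.comp_continuousOn (hθ.sub (by fun_prop))
      have c3 : Continuous fun φ => l (e φ) := hlc.comp hec
      refine c3.continuousOn.sub (ContinuousOn.add ?_ (c2.mul continuousOn_const))
      exact (Complex.continuous_ofReal.comp (c1.sub continuous_const)).continuousOn
    have hd1 : ∀ φ ∈ Set.Icc 0 (2 * Real.pi), Complex.exp (d φ) = 1 := by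
      intro φ hφ
      have h1 := hγ φ hφ
      simp only [← hexpe] at h1
      have h2 : Complex.exp (l (e φ)) = f (Complex.exp (e φ)) /
          Complex.exp (n.natAbs * Real.log M + n * φ * Complex.I) := by
        rw [hl, hk]; simp only [hwe]; rw [he]; simp only [pn_exp]
      have h3 : (‖f (Complex.exp (e φ))‖ : ℂ) = Complex.exp (Real.log ‖f (Complex.exp (e φ))‖ : ℝ) := by
        rw [← Complex.ofReal_exp, Real.exp_log (norm_pos_iff.2 (hfe φ))]
      rw [hd, Complex.exp_sub, h2, h1]
      rw [show (‖((‖f (Complex.exp (e φ))‖ : ℂ) * Complex.exp (θ φ * Complex.I))‖) =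
        ‖f (Complex.exp (e φ))‖ by rw [← h1]]
      rw [h3, ← Complex.exp_add, ← Complex.exp_sub, ← Complex.exp_sub]
      rw [Complex.exp_eq_one_iff]
      exact ⟨0, by push_cast; ring⟩
    have h0m : (0 : ℝ) ∈ Set.Icc 0 (2 * Real.pi) := ⟨le_rfl, by positivity⟩
    have h1m : (2 * Real.pi : ℝ) ∈ Set.Icc 0 (2 * Real.pi) := ⟨by positivity, le_rfl⟩
    have hcst := const_of_exp isPreconnected_Icc hdc hd1 h1m h0m
    have hfeq : f (Complex.exp (e (2 * Real.pi))) = f (Complex.exp (e 0)) := by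
      rw [hexpe, hexpe]; simp
    simp only [hd, hfeq] at hcst
    have he0 : e 0 = ((Real.log M : ℝ) : ℂ) := by simp [e]
    have he1 : e (2 * Real.pi) = (Real.log M : ℝ) + 2 * Real.pi * Complex.I := by simp [e]
    rw [← he1, ← he0]
    have hinc' : ((θ (2 * Real.pi) : ℝ) : ℂ) - θ 0 = 2 * Real.pi * n := by exact_mod_cast hinc
    push_cast at hcst
    linear_combination hcst + Complex.I * hinc'
  have hper : Function.Periodic l (2 * Real.pi * Complex.I) := by
    intro ζ
    have hc : Continuous fun ζ => l (ζ + 2 * Real.pi * Complex.I) - l ζ := by fun_prop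
    have := const_of_exp (S := Set.univ) isPreconnected_univ hc.continuousOn (fun x _ => by
      rw [Complex.exp_sub, hl, hl, hkper, div_self (hk0 x)]) (Set.mem_univ ζ)
      (Set.mem_univ ((Real.log M : ℝ) : ℂ))
    rw [hD0] at this
    exact sub_eq_zero.1 this
  refine ⟨fun z => l (Complex.log z), ?_, ?_⟩
  · intro z₀ hz₀
    have h1 : ContinuousAt (fun z => l (Complex.log (z / z₀) + Complex.log z₀)) z₀ := by
      refine hlc.continuousAt.comp (f := fun z => Complex.log (z / z₀) + Complex.log z₀) ?_
      refine ContinuousAt.add (ContinuousAt.clog (by fun_prop) ?_) continuousAt_const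
      rw [div_self hz₀]; exact Complex.one_mem_slitPlane
    refine h1.congr ?_
    filter_upwards [isOpen_ne.mem_nhds hz₀] with z hz
    have hz : z ≠ 0 := hz
    have : Complex.exp (Complex.log (z / z₀) + Complex.log z₀) = Complex.exp (Complex.log z) := by
      rw [Complex.exp_add, Complex.exp_log (div_ne_zero hz hz₀), Complex.exp_log hz₀,
        Complex.exp_log hz, div_mul_cancel₀ _ hz₀]
    obtain ⟨m, hm⟩ := Complex.exp_eq_exp_iff_exists_int.1 this
    rw [hm]
    exact hper.int_mul m _
  · intro z hz
    have hz0 : z ≠ 0 := norm_pos_iff.1 (hM.trans_le hz)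
    have h1 : w (Complex.log z) = Complex.log z := by
      simp only [w, Complex.log_re, Complex.log_im]
      rw [max_eq_left (Real.log_le_log hM hz)]
      apply Complex.ext <;> simp [Complex.log_re, Complex.log_im]
    simp only [hl, hk, h1, Complex.exp_log hz0]
    rw [mul_div_cancel₀ _ (pn_ne n hz0)]

lemma cont_cutoff_mul {a : ℂ → ℝ} (ha : Continuous a) {M : ℝ} (hM : 0 < M)
    (ha0 : ∀ z, ‖z‖ ≤ M → a z = 0) {L : ℂ → ℂ} (hL : ∀ z, z ≠ 0 → ContinuousAt L z) :
    Continuous fun z => (a z : ℂ) * L z := by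
  rw [continuous_iff_continuousAt]
  intro z
  by_cases hz : z = 0
  · subst hz
    have : (fun _ => (0 : ℂ)) =ᶠ[𝓝 (0 : ℂ)] fun z => (a z : ℂ) * L z := by
      filter_upwards [Metric.ball_mem_nhds (0 : ℂ) hM] with z hz
      rw [ha0 z (by simpa using (Metric.mem_ball.1 hz).le)]; simp
    exact continuousAt_const.congr this
  · exact ContinuousAt.mul (by fun_prop) (hL z hz)

lemma hty_const_infty : Hty (sph fun _ => (1, 0)) (stdSphereMap 0) := by
  refine ⟨fun p => mk (1, ((p.2 : ℝ) : ℂ)), ?_, fun z => ?_, fun z => ?_⟩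
  · rw [continuous_iff_continuousAt]
    intro p
    exact ContinuousAt.comp (g := mk) (f := fun p : OnePoint ℂ × I => ((1 : ℂ), ((p.2 : ℝ) : ℂ)))
      (continuousAt_mk (by simp)) (by fun_prop)
  · induction z using OnePoint.rec <;> simp [mk]
  · induction z using OnePoint.rec with
    | infty => simp [mk, std_infty]
    | coe z => simp [mk, std_coe, pn_zero]

/-- Pairs that agree with `(pn n, 0)` near infinity are homotopic to the standard map. -/
lemma hty_std (n : ℤ) (q : ℂ → ℂ × ℂ) (hq : Continuous q) (h0 : ∀ z, q z ≠ 0) {r : ℝ} (hr : 0 < r)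
    (hout : ∀ z, 2 * r ≤ ‖z‖ → q z = (pn n z, 0)) : Hty (sph q) (stdSphereMap n) := by
  have hgr : ∀ (Q : ℂ → ℝ → ℂ × ℂ) (r : ℝ), (∀ z t, r ≤ ‖z‖ → (Q z t).2 = 0) →
      ∀ C : ℝ, 0 < C → ∃ r : ℝ, ∀ z t, 0 ≤ t → t ≤ 1 → r ≤ ‖z‖ →
      C * ‖(Q z t).2‖ ≤ ‖(Q z t).1‖ := by
    intro Q r h C hC
    refine ⟨r, fun z t _ _ hz => ?_⟩
    rw [h z t hz]; simp
  -- smoothing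
  obtain ⟨p, hp1, hp2, hp3, -⟩ := hq.exists_contDiff_approx_and_eqOn 1 (ε := fun z => ‖q z‖)
    (by fun_prop) (fun z => norm_pos_iff.2 (h0 z)) (S := {z | 3 * r ≤ ‖z‖})
    (U := {z | 2 * r < ‖z‖}) (isClosed_le (by fun_prop) (by fun_prop))
    ((isOpen_lt (by fun_prop) (by fun_prop)).mem_nhdsSet.2 (fun z hz => by
      simp only [Set.mem_ofPred_eq] at hz ⊢; linarith))
    (by
      have : ContDiff ℝ 1 fun z => (pn n z, (0 : ℂ)) := (pn_contDiff n).prodMk contDiff_const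
      refine ContDiffOn.congr (f := fun z => (pn n z, (0 : ℂ))) this.contDiffOn ?_
      intro z hz
      exact hout z (le_of_lt hz))
  have hpc : Continuous p := hp1.continuous
  have hpout : ∀ z, 3 * r ≤ ‖z‖ → p z = (pn n z, 0) := fun z hz => by
    rw [hp3 hz, hout z (by linarith)]
  have hne : ∀ z (t : ℝ), 0 ≤ t → t ≤ 1 → q z + t • (p z - q z) ≠ 0 := by
    intro z t ht0 ht1 h
    have h1 : q z = - (t • (p z - q z)) := eq_neg_of_add_eq_zero_left h
    have h2 : ‖q z‖ = t * ‖p z - q z‖ := by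
      rw [h1, norm_neg, norm_smul, Real.norm_of_nonneg ht0, ← h1]
    have h3 := hp2 z
    rw [dist_eq_norm] at h3
    nlinarith [norm_nonneg (p z - q z)]
  have s1 : Hty (sph q) (sph p) := by
    have := hty_sph (fun z t => q z + t • (p z - q z)) (by fun_prop) hne
      (hgr _ (3 * r) fun z t hz => by rw [hpout z hz, hout z (by linarith)]; simp)
    simpa using this
  have hp0 : ∀ z, p z ≠ 0 := fun z => by simpa using hne z 1 zero_le_one le_rfl
  -- generic direction
  have hdense : Dense (Set.range fun x : ℝ × ℂ => x.1 • p x.2)ᶜ := by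
    apply ContDiff.dense_compl_range_of_finrank_lt_finrank
    · exact contDiff_fst.smul (hp1.comp contDiff_snd)
    · simp [Complex.finrank_real_complex]
  obtain ⟨v, hv1, hv2⟩ := Metric.dense_iff.1 hdense ((0 : ℂ), (-1 : ℂ)) (1 / 2) (by norm_num)
  obtain ⟨a, b⟩ := v
  have hb : b.re < 0 := by
    rw [Metric.mem_ball, dist_eq_norm] at hv1
    have h1 : ‖b + 1‖ < 1 / 2 := by
      refine lt_of_le_of_lt ?_ hv1
      have := norm_snd_le (((a, b) : ℂ × ℂ) - (0, -1))
      simpa using this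
    have h2 := (Complex.abs_re_le_norm (b + 1)).trans_lt h1
    rw [abs_lt] at h2
    simp at h2
    linarith [h2.2]
  have hb0 : b ≠ 0 := by rintro rfl; simp at hb
  have hv : ∀ (s : ℝ) z, s • p z ≠ (a, b) := fun s z h => hv2 ⟨(s, z), h⟩
  set η : ℂ → ℝ := fun z => max 0 (min 1 (4 - ‖z‖ / r)) with hη
  have hηc : Continuous η := by fun_prop
  have hη0 : ∀ z, 0 ≤ η z := fun z => le_max_left _ _
  have hη1 : ∀ z, η z ≤ 1 := fun z => max_le zero_le_one (min_le_left _ _)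
  have hηin : ∀ z, ‖z‖ ≤ 3 * r → η z = 1 := by
    intro z hz
    have : ‖z‖ / r ≤ 3 := by rw [div_le_iff₀ hr]; exact hz
    simp only [hη]
    rw [min_eq_left (by linarith), max_eq_right zero_le_one]
  have hηout : ∀ z, 4 * r ≤ ‖z‖ → η z = 0 := by
    intro z hz
    have : 4 ≤ ‖z‖ / r := by rw [le_div_iff₀ hr]; exact hz
    simp only [hη]
    rw [min_eq_right (by linarith), max_eq_left (by linarith)]
  have hηpn : ∀ z, η z = 0 → pn n z ≠ 0 := by
    intro z hz
    apply pn_ne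
    rintro rfl
    rw [hηin 0 (by simpa using hr.le)] at hz
    exact one_ne_zero hz
  have s2 : Hty (sph p) (sph fun z => (1 - η z) • p z - η z • ((a, b) : ℂ × ℂ)) := by
    have := hty_sph (fun z t => (1 - t * η z) • p z - (t * η z) • ((a, b) : ℂ × ℂ)) (by fun_prop)
      (by
        intro z t ht0 ht1 h
        have h1 := sub_eq_zero.1 h
        by_cases hs : t * η z = 0
        · rw [hs] at h1; simp at h1; exact hp0 z h1
        · apply hv ((t * η z)⁻¹ * (1 - t * η z)) z
          rw [mul_smul, h1, smul_smul, inv_mul_cancel₀ hs, one_smul])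
      (hgr _ (4 * r) fun z t hz => by rw [hpout z (by linarith), hηout z hz]; simp)
    simpa using this
  have hend : (fun z => (1 - η z) • p z - η z • ((a, b) : ℂ × ℂ)) =
      fun z => ((1 - η z : ℝ) * pn n z - η z * a, -(η z * b)) := by
    ext1 z
    rcases le_total ‖z‖ (3 * r) with hz | hz
    · rw [hηin z hz]; simp
    · rw [hpout z hz]; simp
  rw [hend] at s2
  have hpnc := pn_cont n
  have s3 : Hty (sph fun z => (((1 - η z : ℝ) * pn n z - η z * a, -(η z * b)) : ℂ × ℂ))
      (sph fun z => (pn n z, -(η z * b))) := by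
    have := hty_sph (fun z t => ((1 - t : ℝ) * ((1 - η z : ℝ) * pn n z - η z * a) + t * pn n z,
        -(η z * b))) (by fun_prop)
      (by
        intro z t ht0 ht1 h
        simp only [Prod.mk_eq_zero, neg_eq_zero, mul_eq_zero, hb0, or_false,
          Complex.ofReal_eq_zero] at h
        obtain ⟨h1, h2⟩ := h
        apply hηpn z h2
        rw [h2] at h1
        simp at h1
        linear_combination h1)
      (hgr _ (4 * r) fun z t hz => by simp [hηout z hz])
    simpa using this
  refine s1.trans (s2.trans (s3.trans ?_))
  by_cases hn : n = 0
  · subst hn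
    have := hty_sph (fun z t => (pn 0 z, (1 - t : ℝ) * -(η z * b))) (by fun_prop)
      (by
        intro z t ht0 ht1 h
        simp [pn_zero] at h)
      (hgr _ (4 * r) fun z t hz => by simp [hηout z hz])
    simp only [sub_zero, sub_self, pn_zero, Complex.ofReal_zero, Complex.ofReal_one, one_mul,
      zero_mul] at this
    simp only [pn_zero]
    exact this.trans hty_const_infty
  · have := hty_sph (fun z t => (pn n z, (1 - t : ℝ) * -(η z * b) + t)) (by fun_prop)
      (by
        intro z t ht0 ht1 h
        simp only [Prod.mk_eq_zero] at h
        obtain ⟨h1, h2⟩ := h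
        have hz : z = 0 := by
          by_contra hz
          exact pn_ne n hz h1
        subst hz
        rw [hηin 0 (by simpa using hr.le)] at h2
        have h3 := congrArg Complex.re h2
        simp at h3
        rcases ht0.eq_or_lt with ht | ht
        · rw [← ht] at h3; simp at h3; linarith
        · nlinarith [mul_nonneg (sub_nonneg.2 ht1) (neg_nonneg.2 hb.le)])
      (by
        intro C hC
        refine ⟨max (max 1 C) (4 * r), fun z t ht0 ht1 hz => ?_⟩
        have hz1 : 1 ≤ ‖z‖ := (le_max_left _ _).trans ((le_max_left _ _).trans hz)
        have hz2 : C ≤ ‖z‖ := (le_max_right _ _).trans ((le_max_left _ _).trans hz)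
        have hz3 : 4 * r ≤ ‖z‖ := (le_max_right _ _).trans hz
        simp only [hηout z hz3]
        have h1 : ‖z‖ ≤ ‖pn n z‖ := by
          rw [pn_norm]
          exact le_self_pow₀ hz1 (by omega)
        have h2 : ‖((1 - t : ℝ) : ℂ) * -(((0 : ℝ) : ℂ) * b) + t‖ ≤ 1 := by
          simp [abs_of_nonneg ht0, ht1]
        nlinarith)
    have e1 : (sph fun z => (pn n z, ((1 - 1 : ℝ) : ℂ) * -(η z * b) + ((1 : ℝ) : ℂ)))
        = stdSphereMap n := by
      ext1 z
      induction z using OnePoint.rec with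
      | infty => simp [std_infty, hn]
      | coe z => simp [std_coe, mk]
    rw [e1] at this
    simpa using this

lemma dir1 (f g : ℂ → ℂ) (hf : Continuous f) (hg : Continuous g)
    (hfg : ∀ z : ℂ, ¬(f z = 0 ∧ g z = 0))
    (hlim : ∀ C : ℝ, 0 < C → ∃ r : ℝ, 0 < r ∧ ∀ z : ℂ, r ≤ ‖z‖ → C * ‖g z‖ ≤ ‖f z‖)
    (M : ℝ) (hM : 0 < M) (hfM : ∀ z : ℂ, M ≤ ‖z‖ → f z ≠ 0) (n : ℤ)
    (hw : IsWindingNumber (fun φ : ℝ => f ((M : ℂ) * Complex.exp ((φ : ℂ) * Complex.I))) n) :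
    Hty (sph fun z => (f z, g z)) (stdSphereMap n) := by
  obtain ⟨L, hLc, hL⟩ := wind_log hf hM hfM hw
  set α : ℂ → ℝ := fun z => max 0 (min 1 (‖z‖ / M - 1)) with hα
  have hαc : Continuous α := by fun_prop
  have hα0 : ∀ z, 0 ≤ α z := fun z => le_max_left _ _
  have hα1 : ∀ z, α z ≤ 1 := fun z => max_le zero_le_one (min_le_left _ _)
  have hαin : ∀ z, ‖z‖ ≤ M → α z = 0 := by
    intro z hz
    have : ‖z‖ / M ≤ 1 := by rw [div_le_iff₀ hM]; linarith
    simp only [hα]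
    rw [min_eq_right (by linarith), max_eq_left (by linarith)]
  have hαout : ∀ z, 2 * M ≤ ‖z‖ → α z = 1 := by
    intro z hz
    have : 2 ≤ ‖z‖ / M := by rw [le_div_iff₀ hM]; exact hz
    simp only [hα]
    rw [min_eq_left (by linarith), max_eq_right zero_le_one]
  have hαL := cont_cutoff_mul hαc hM hαin hLc
  have hf0 : ∀ z, f z = 0 → α z = 0 ∧ g z ≠ 0 := by
    intro z hz
    refine ⟨hαin z ?_, fun h => hfg z ⟨hz, h⟩⟩
    by_contra h
    exact hfM z (not_le.1 h).le hz
  have s1 := hty_sph (fun z t => (f z, ((1 - t * α z : ℝ) : ℂ) * g z)) (by fun_prop)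
    (by
      intro z t _ _ h
      simp only [Prod.mk_eq_zero] at h
      obtain ⟨h1, h2⟩ := h
      obtain ⟨h3, h4⟩ := hf0 z h1
      rw [h3] at h2
      simp at h2
      exact h4 h2)
    (by
      intro C hC
      obtain ⟨r, -, hr⟩ := hlim C hC
      refine ⟨r, fun z t ht0 ht1 hz => ?_⟩
      refine le_trans ?_ (hr z hz)
      have h1 : 0 ≤ t * α z := mul_nonneg ht0 (hα0 z)
      have h2 : t * α z ≤ 1 := mul_le_one₀ ht1 (hα0 z) (hα1 z)
      rw [norm_mul, Complex.norm_real, Real.norm_of_nonneg (by linarith)]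
      apply mul_le_mul_of_nonneg_left _ hC.le
      nlinarith [norm_nonneg (g z)])
  have hne2 : ∀ z (t : ℝ), (f z * Complex.exp (-(t * (α z * L z))), ((1 - α z : ℝ) : ℂ) * g z)
      ≠ (0 : ℂ × ℂ) := by
    intro z t h
    simp only [Prod.mk_eq_zero, mul_eq_zero, Complex.exp_ne_zero, or_false] at h
    obtain ⟨h1, h2⟩ := h
    obtain ⟨h3, h4⟩ := hf0 z h1
    rw [h3] at h2
    simp at h2
    exact h4 h2
  have s2 := hty_sph (fun z t => (f z * Complex.exp (-(t * (α z * L z))),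
      ((1 - α z : ℝ) : ℂ) * g z)) (by
        have : Continuous fun p : ℂ × ℝ => (α p.1 : ℂ) * L p.1 := hαL.comp continuous_fst
        fun_prop)
    (fun z t _ _ => hne2 z t)
    (by
      intro C hC
      refine ⟨2 * M, fun z t ht0 ht1 hz => ?_⟩
      simp [hαout z hz])
  have s3 := hty_std n (fun z => (f z * Complex.exp (-((1 : ℝ) * (α z * L z))),
      ((1 - α z : ℝ) : ℂ) * g z)) (by fun_prop) (fun z => hne2 z 1) hM
    (by
      intro z hz
      rw [hL z (by linarith), hαout z hz]
      simp [mul_assoc, ← Complex.exp_add])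
  have s12 := s2.trans s3
  simp at s1 s12
  exact s1.trans s12

/-- Entries of the orthogonal projection of `ℂ²` onto the line `x`. -/
noncomputable def c22 (x : OnePoint ℂ) : ℂ := OnePoint.elim x 0 (fun w => 1 / (1 + (‖w‖ : ℂ) ^ 2))
/-- Off-diagonal entry. -/
noncomputable def c12 (x : OnePoint ℂ) : ℂ := OnePoint.elim x 0 (fun w => w / (1 + (‖w‖ : ℂ) ^ 2))

lemma den_norm (w : ℂ) : ‖1 + (‖w‖ : ℂ) ^ 2‖ = 1 + ‖w‖ ^ 2 := by
  have : (1 + (‖w‖ : ℂ) ^ 2) = ((1 + ‖w‖ ^ 2 : ℝ) : ℂ) := by push_cast; rfl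
  rw [this, Complex.norm_real, Real.norm_of_nonneg (by positivity)]

lemma den_ne (w : ℂ) : 1 + (‖w‖ : ℂ) ^ 2 ≠ 0 := by
  rw [← norm_ne_zero_iff, den_norm]; positivity

lemma c22_cont : Continuous c22 := by
  rw [OnePoint.continuous_iff]
  constructor
  · rw [coclosedCompact_eq_cocompact, ← Metric.cobounded_eq_cocompact]
    have h1 : Tendsto (fun w : ℂ => ‖w‖⁻¹) (Bornology.cobounded ℂ) (𝓝 0) :=
      tendsto_inv_atTop_zero.comp tendsto_norm_cobounded_atTop
    refine squeeze_zero_norm' ?_ h1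
    filter_upwards [tendsto_norm_cobounded_atTop.eventually_ge_atTop 1] with w hw
    change ‖1 / (1 + (‖w‖ : ℂ) ^ 2)‖ ≤ _
    rw [norm_div, den_norm, norm_one, ← one_div]
    apply one_div_le_one_div_of_le (by linarith)
    nlinarith
  · exact Continuous.div (by fun_prop) (by fun_prop) den_ne

lemma c12_cont : Continuous c12 := by
  rw [OnePoint.continuous_iff]
  constructor
  · rw [coclosedCompact_eq_cocompact, ← Metric.cobounded_eq_cocompact]
    have h1 : Tendsto (fun w : ℂ => ‖w‖⁻¹) (Bornology.cobounded ℂ) (𝓝 0) :=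
      tendsto_inv_atTop_zero.comp tendsto_norm_cobounded_atTop
    refine squeeze_zero_norm' ?_ h1
    filter_upwards [tendsto_norm_cobounded_atTop.eventually_ge_atTop 1] with w hw
    change ‖w / (1 + (‖w‖ : ℂ) ^ 2)‖ ≤ _
    rw [norm_div, den_norm, ← one_div, div_le_div_iff₀ (by positivity) (by linarith)]
    nlinarith
  · exact Continuous.div (by fun_prop) (by fun_prop) den_ne

/-- Orthogonal projection onto the line `x`. -/
noncomputable def prj (x : OnePoint ℂ) (q : ℂ × ℂ) : ℂ × ℂ :=
  ((1 - c22 x) * q.1 + c12 x * q.2, (starRingEnd ℂ) (c12 x) * q.1 + c22 x * q.2)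

lemma prj_smul (x : OnePoint ℂ) (a : ℂ) (q : ℂ × ℂ) : prj x (a • q) = a • prj x q := by
  ext <;> simp [prj] <;> ring

lemma prj_infty (q : ℂ × ℂ) : prj ∞ q = (q.1, 0) := by
  simp [prj, c22, c12]

lemma prj_coe (w : ℂ) (q : ℂ × ℂ) : prj (w : OnePoint ℂ) q =
    (((starRingEnd ℂ) w * q.1 + q.2) / (1 + (‖w‖ : ℂ) ^ 2)) • ((w, 1) : ℂ × ℂ) := by
  have h := den_ne w
  have h2 := Complex.mul_conj' w
  ext
  · simp [prj, c22, c12]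
    field_simp
    linear_combination (-q.1) * h2
  · simp [prj, c22, c12]
    field_simp

lemma mk_smul (a : ℂ) (ha : a ≠ 0) (q : ℂ × ℂ) : mk (a • q) = mk q := by
  by_cases h : q.2 = 0
  · simp [mk, h]
  · simp [mk, h, ha]
    rw [mul_div_mul_left _ _ ha]

lemma mk_prj (x : OnePoint ℂ) (q : ℂ × ℂ) (h : prj x q ≠ 0) : mk (prj x q) = x := by
  induction x using OnePoint.rec with
  | infty => rw [prj_infty]; simp [mk]
  | coe w =>
    rw [prj_coe] at h ⊢
    rw [mk_smul _ (fun h0 => h (by rw [h0, zero_smul]))]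
    simp [mk]

lemma prj_of_mk (q : ℂ × ℂ) : prj (mk q) q = q := by
  by_cases h : q.2 = 0
  · have : mk q = ∞ := by simp [mk, h]
    rw [this, prj_infty]; ext <;> simp [h]
  · have h1 : mk q = ((q.1 / q.2 : ℂ) : OnePoint ℂ) := by simp [mk, h]
    rw [h1, prj_coe]
    have h3 : q.1 = (q.1 / q.2) * q.2 := by field_simp
    set w := q.1 / q.2
    have h2 := Complex.mul_conj' w
    have hd := den_ne w
    have h4 : ((starRingEnd ℂ) w * q.1 + q.2) / (1 + (‖w‖ : ℂ) ^ 2) = q.2 := by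
      rw [div_eq_iff hd, h3]
      linear_combination q.2 * h2
    rw [h4]
    ext
    · simp [h3, mul_comm]
    · simp

/-- Closeness of points of the sphere. -/
def Near (x y : OnePoint ℂ) : Prop := ‖c22 x - c22 y‖ < 1 / 4 ∧ ‖c12 x - c12 y‖ < 1 / 4

lemma prj_ne {x y : OnePoint ℂ} (h : Near x y) {q : ℂ × ℂ} (hq : q ≠ 0) (hx : mk q = x) :
    prj y q ≠ 0 := by
  intro h0
  have h1 := prj_of_mk q
  rw [hx] at h1
  have e1 := congrArg Prod.fst h1
  have e2 := congrArg Prod.snd h1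
  have f1 := congrArg Prod.fst h0
  have f2 := congrArg Prod.snd h0
  simp only [prj, Prod.fst_zero, Prod.snd_zero] at e1 e2 f1 f2
  obtain ⟨n1, n2⟩ := h
  have g1 : q.1 = -(c22 x - c22 y) * q.1 + (c12 x - c12 y) * q.2 := by
    linear_combination f1 - e1
  have g2 : q.2 = (starRingEnd ℂ) (c12 x - c12 y) * q.1 + (c22 x - c22 y) * q.2 := by
    rw [map_sub]
    linear_combination f2 - e2
  have k1 : ‖q.1‖ ≤ ‖c22 x - c22 y‖ * ‖q.1‖ + ‖c12 x - c12 y‖ * ‖q.2‖ := by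
    calc ‖q.1‖ = ‖-(c22 x - c22 y) * q.1 + (c12 x - c12 y) * q.2‖ := by rw [← g1]
      _ ≤ _ := by
        refine (norm_add_le _ _).trans ?_
        rw [norm_mul, norm_mul, norm_neg]
  have k2 : ‖q.2‖ ≤ ‖c12 x - c12 y‖ * ‖q.1‖ + ‖c22 x - c22 y‖ * ‖q.2‖ := by
    calc ‖q.2‖ = ‖(starRingEnd ℂ) (c12 x - c12 y) * q.1 + (c22 x - c22 y) * q.2‖ := by rw [← g2]
      _ ≤ _ := by
        refine (norm_add_le _ _).trans ?_
        rw [norm_mul, norm_mul, RCLike.norm_conj]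
  have k3 : ‖q.1‖ + ‖q.2‖ ≤ 0 := by
    nlinarith [norm_nonneg q.1, norm_nonneg q.2]
  apply hq
  ext
  · exact norm_le_zero_iff.1 (by linarith [norm_nonneg q.2])
  · exact norm_le_zero_iff.1 (by linarith [norm_nonneg q.1])

/-- `R` lifts to homogeneous coordinates on both discs, with clutching function `lam`. -/
def HasLift (M : ℝ) (lam : ℂ → ℂ) (R : OnePoint ℂ → OnePoint ℂ) : Prop :=
  ∃ Qp Qm : ℂ → ℂ × ℂ, ContinuousOn Qp (Metric.closedBall 0 M) ∧
    ContinuousOn Qm (Metric.closedBall 0 M⁻¹) ∧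
    (∀ z ∈ Metric.closedBall (0 : ℂ) M, Qp z ≠ 0 ∧ mk (Qp z) = R z) ∧
    (∀ w ∈ Metric.closedBall (0 : ℂ) M⁻¹, Qm w ≠ 0 ∧ mk (Qm w) = R (mk (1, w))) ∧
    ∀ z : ℂ, ‖z‖ = M → Qp z = lam z • Qm z⁻¹

lemma inv_cont : Continuous fun w : ℂ => mk (1, w) := by
  rw [continuous_iff_continuousAt]
  intro w
  exact ContinuousAt.comp (g := mk) (f := fun w : ℂ => ((1 : ℂ), w))
      (continuousAt_mk (by simp)) (by fun_prop)

lemma prj_contOn {R' : OnePoint ℂ → OnePoint ℂ} (hR' : Continuous R') {u : ℂ → OnePoint ℂ}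
    (hu : Continuous u) {Q : ℂ → ℂ × ℂ} {S : Set ℂ} (hQ : ContinuousOn Q S) :
    ContinuousOn (fun z => prj (R' (u z)) (Q z)) S := by
  have a1 : Continuous fun z => c22 (R' (u z)) := c22_cont.comp (hR'.comp hu)
  have a2 : Continuous fun z => c12 (R' (u z)) := c12_cont.comp (hR'.comp hu)
  have a3 : Continuous fun z => (starRingEnd ℂ) (c12 (R' (u z))) := Complex.continuous_conj.comp a2
  have b1 : ContinuousOn (fun z => (Q z).1) S := continuous_fst.comp_continuousOn hQ
  have b2 : ContinuousOn (fun z => (Q z).2) S := continuous_snd.comp_continuousOn hQ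
  unfold prj
  exact ContinuousOn.prodMk
    (((continuous_const.sub a1).continuousOn.mul b1).add (a2.continuousOn.mul b2))
    ((a3.continuousOn.mul b1).add (a1.continuousOn.mul b2))

lemma HasLift.step {M : ℝ} {lam : ℂ → ℂ} {R R' : OnePoint ℂ → OnePoint ℂ}
    (h : HasLift M lam R) (hR' : Continuous R') (hn : ∀ x, Near (R x) (R' x)) (hM : 0 < M) :
    HasLift M lam R' := by
  obtain ⟨Qp, Qm, cp, cm, hp, hm, hl⟩ := h
  refine ⟨fun z => prj (R' (z : OnePoint ℂ)) (Qp z), fun w => prj (R' (mk (1, w))) (Qm w),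
    prj_contOn hR' OnePoint.continuous_coe cp, prj_contOn hR' inv_cont cm, ?_, ?_, ?_⟩
  · intro z hz
    have := prj_ne (hn z) (hp z hz).1 (hp z hz).2
    exact ⟨this, mk_prj _ _ this⟩
  · intro z hz
    have := prj_ne (hn (mk (1, z))) (hm z hz).1 (hm z hz).2
    exact ⟨this, mk_prj _ _ this⟩
  · intro z hz
    have hz0 : z ≠ 0 := by rintro rfl; simp at hz; linarith
    have : mk (1, z⁻¹) = (z : OnePoint ℂ) := by simp [mk, hz0]
    simp only [this]
    rw [hl z hz, prj_smul]

lemma HasLift.hty {M : ℝ} {lam : ℂ → ℂ} {A B : OnePoint ℂ → OnePoint ℂ}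
    (h : HasLift M lam A) (hM : 0 < M) (hAB : Hty A B) : HasLift M lam B := by
  obtain ⟨H, hc, h0, h1⟩ := hAB
  have hA : (fun z => H (z, 0)) = A := funext h0
  have hB : (fun z => H (z, 1)) = B := funext h1
  have hct : ∀ t, Continuous fun z => H (z, t) := fun t => by fun_prop
  have key : ∀ t₀ : I, ∀ᶠ t in 𝓝 t₀, ∀ x ∈ (Set.univ : Set (OnePoint ℂ)),
      Near (H (x, t)) (H (x, t₀)) := by
    intro t₀
    apply isCompact_univ.eventually_forall_of_forall_eventually
    intro x _
    have a1 : Continuous fun p : I × OnePoint ℂ => ‖c22 (H (p.2, p.1)) - c22 (H (p.2, t₀))‖ :=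
      ((c22_cont.comp (hc.comp (by fun_prop))).sub (c22_cont.comp (hc.comp (by fun_prop)))).norm
    have a2 : Continuous fun p : I × OnePoint ℂ => ‖c12 (H (p.2, p.1)) - c12 (H (p.2, t₀))‖ :=
      ((c12_cont.comp (hc.comp (by fun_prop))).sub (c12_cont.comp (hc.comp (by fun_prop)))).norm
    have b1 := a1.continuousAt (x := (t₀, x)) |>.eventually_lt
      (continuousAt_const (y := (1 / 4 : ℝ))) (by simp)
    have b2 := a2.continuousAt (x := (t₀, x)) |>.eventually_lt
      (continuousAt_const (y := (1 / 4 : ℝ))) (by simp)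
    filter_upwards [b1, b2] with p p1 p2 using ⟨p1, p2⟩
  have hsymm : ∀ x y, Near x y → Near y x := fun x y h =>
    ⟨by rw [norm_sub_rev]; exact h.1, by rw [norm_sub_rev]; exact h.2⟩
  have hloc : IsLocallyConstant fun t : I => HasLift M lam fun z => H (z, t) := by
    rw [IsLocallyConstant.iff_eventually_eq]
    intro t₀
    filter_upwards [key t₀] with t ht
    apply propext
    constructor
    · intro h; exact h.step (hct _) (fun x => ht x trivial) hM
    · intro h; exact h.step (hct _) (fun x => hsymm _ _ (ht x trivial)) hM
  have := hloc.apply_eq_of_isPreconnected isPreconnected_univ (Set.mem_univ (0 : I))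
    (Set.mem_univ (1 : I))
  simp only [hA, hB] at this
  rw [← this]; exact h

lemma log_closedBall {r : ℝ} (hr : 0 < r) {a : ℂ → ℂ} (ha : ContinuousOn a (Metric.closedBall 0 r))
    (h0 : ∀ z ∈ Metric.closedBall (0 : ℂ) r, a z ≠ 0) :
    ∃ A : ℂ → ℂ, Continuous A ∧ ∀ z ∈ Metric.closedBall (0 : ℂ) r, Complex.exp (A z) = a z := by
  set ρ : ℂ → ℂ := fun z => ((r / max r ‖z‖ : ℝ) : ℂ) * z with hρ
  have hmax : ∀ z : ℂ, 0 < max r ‖z‖ := fun z => lt_max_of_lt_left hr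
  have hρc : Continuous ρ := by
    have : Continuous fun z : ℂ => r / max r ‖z‖ :=
      Continuous.div (by fun_prop) (by fun_prop) (fun z => (hmax z).ne')
    fun_prop
  have hρm : ∀ z, ρ z ∈ Metric.closedBall (0 : ℂ) r := by
    intro z
    rw [mem_closedBall_zero_iff, hρ]
    simp only
    rw [norm_mul, Complex.norm_real, Real.norm_of_nonneg (div_nonneg hr.le (hmax z).le),
      div_mul_eq_mul_div, div_le_iff₀ (hmax z)]
    exact mul_le_mul_of_nonneg_left (le_max_right _ _) hr.le
  have hρid : ∀ z ∈ Metric.closedBall (0 : ℂ) r, ρ z = z := by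
    intro z hz
    rw [mem_closedBall_zero_iff] at hz
    simp only [hρ]
    rw [max_eq_left hz, div_self hr.ne']; simp
  obtain ⟨l, hl, hl'⟩ := exists_log (fun z => a (ρ z)) (ha.comp_continuous hρc hρm)
    (fun z => h0 _ (hρm z))
  exact ⟨l, hl, fun z hz => by rw [hl', hρid z hz]⟩

lemma lift_std {M : ℝ} (hM : 0 < M) {lam : ℂ → ℂ} {n : ℤ} (h : HasLift M lam (stdSphereMap n)) :
    IsWindingNumber (fun φ : ℝ => lam ((M : ℂ) * Complex.exp ((φ : ℂ) * Complex.I))) n := by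
  obtain ⟨Qp, Qm, cp, cm, hp, hm, hl⟩ := h
  have hM' : 0 < M⁻¹ := inv_pos.2 hM
  have pa : ∀ z ∈ Metric.closedBall (0 : ℂ) M, (Qp z).2 ≠ 0 ∧ (Qp z).1 = pn n z * (Qp z).2 := by
    intro z hz
    have h1 := (hp z hz).2
    rw [std_coe] at h1
    unfold mk at h1
    split_ifs at h1 with h2
    · exact absurd h1.symm (OnePoint.coe_ne_infty _)
    · refine ⟨h2, ?_⟩
      have := OnePoint.coe_injective h1
      rw [← this]; field_simp
  have pb : ∀ w ∈ Metric.closedBall (0 : ℂ) M⁻¹, (Qm w).1 ≠ 0 := by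
    intro w hw h3
    obtain ⟨h1, h2⟩ := hm w hw
    have h4 : (Qm w).2 ≠ 0 := fun h4 => h1 (Prod.ext h3 h4)
    have h5 : mk (Qm w) = ((0 : ℂ) : OnePoint ℂ) := by simp [mk, h3, h4]
    rw [h5] at h2
    by_cases hw0 : w = 0
    · subst hw0
      have h6 : mk (1, 0) = ∞ := by simp [mk]
      rw [h6, std_infty] at h2
      split_ifs at h2
      · exact one_ne_zero (OnePoint.coe_injective h2).symm
      · exact OnePoint.coe_ne_infty _ h2
    · have h6 : mk (1, w) = ((w⁻¹ : ℂ) : OnePoint ℂ) := by simp [mk, hw0]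
      rw [h6, std_coe] at h2
      exact pn_ne n (inv_ne_zero hw0) (OnePoint.coe_injective h2).symm
  obtain ⟨A, cA, hA⟩ := log_closedBall hM (continuous_snd.comp_continuousOn cp)
    (fun z hz => (pa z hz).1)
  obtain ⟨B, cB, hB⟩ := log_closedBall hM' (continuous_fst.comp_continuousOn cm) pb
  set e : ℝ → ℂ := fun φ => (M : ℂ) * Complex.exp ((φ : ℂ) * Complex.I) with he
  have hec : Continuous e := by fun_prop
  have heM : ∀ φ, ‖e φ‖ = M := by
    intro φ
    simp [e, Complex.norm_exp_ofReal_mul_I, abs_of_pos hM]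
  have he0 : ∀ φ, e φ ≠ 0 := fun φ => norm_pos_iff.1 (by rw [heM]; exact hM)
  have hexp : ∀ φ, e φ = Complex.exp ((Real.log M : ℝ) + φ * Complex.I) := by
    intro φ
    rw [Complex.exp_add, ← Complex.ofReal_exp, Real.exp_log hM]
  set u : ℝ → ℂ := fun φ => (n.natAbs * (Real.log M : ℝ) + n * φ * Complex.I) + A (e φ)
    - B ((e φ)⁻¹) with hu
  have hucont : Continuous u := by
    have : Continuous fun φ => (e φ)⁻¹ := hec.inv₀ he0
    fun_prop
  have hlam : ∀ φ, lam (e φ) = Complex.exp (u φ) := by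
    intro φ
    have m1 : e φ ∈ Metric.closedBall (0 : ℂ) M := by
      rw [mem_closedBall_zero_iff, heM]
    have m2 : (e φ)⁻¹ ∈ Metric.closedBall (0 : ℂ) M⁻¹ := by
      rw [mem_closedBall_zero_iff, norm_inv, heM]
    have h1 := congrArg Prod.fst (hl (e φ) (heM φ))
    rw [(pa _ m1).2] at h1
    simp only [Prod.smul_fst, smul_eq_mul] at h1
    have h2 := hA _ m1
    have h3 := hB _ m2
    simp only [Function.comp] at h2 h3
    rw [hu]
    simp only
    rw [Complex.exp_sub, Complex.exp_add, h2, h3, ← pn_exp, ← hexp, h1,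
      mul_div_cancel_right₀ _ (pb _ m2)]
  refine ⟨fun φ => (u φ).im, (Complex.continuous_im.comp hucont).continuousOn, ?_, ?_⟩
  · intro t _
    change lam (e t) = ‖lam (e t)‖ * _
    rw [hlam, Complex.norm_exp, Complex.ofReal_exp, ← Complex.exp_add, Complex.re_add_im]
  · have hper : e (2 * Real.pi) = e 0 := by simp [e]
    simp only [hu, hper]
    simp
    ring

lemma lift_pair (f g : ℂ → ℂ) (hf : Continuous f) (hg : Continuous g)
    (hfg : ∀ z : ℂ, ¬(f z = 0 ∧ g z = 0))
    (hlim : ∀ C : ℝ, 0 < C → ∃ r : ℝ, 0 < r ∧ ∀ z : ℂ, r ≤ ‖z‖ → C * ‖g z‖ ≤ ‖f z‖)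
    (M : ℝ) (hM : 0 < M) (hfM : ∀ z : ℂ, M ≤ ‖z‖ → f z ≠ 0) :
    HasLift M f (sph fun z => (f z, g z)) := by
  have hinv : ∀ w ∈ Metric.closedBall (0 : ℂ) M⁻¹, w ≠ 0 → f w⁻¹ ≠ 0 := by
    intro w hw hw0
    rw [mem_closedBall_zero_iff] at hw
    apply hfM
    rw [norm_inv]
    exact (le_inv_comm₀ hM (norm_pos_iff.2 hw0)).2 hw
  refine ⟨fun z => (f z, g z), fun w => (1, if w = 0 then 0 else g w⁻¹ / f w⁻¹),
    by fun_prop, ?_, ?_, ?_, ?_⟩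
  · refine ContinuousOn.prodMk continuousOn_const ?_
    intro w hw
    by_cases hw0 : w = 0
    · subst hw0
      apply ContinuousAt.continuousWithinAt
      rw [Metric.continuousAt_iff]
      intro ε hε
      obtain ⟨r, hr, h⟩ := hlim (2 / ε) (by positivity)
      refine ⟨min r⁻¹ M⁻¹, lt_min (inv_pos.2 hr) (inv_pos.2 hM), fun {w} hw => ?_⟩
      rw [dist_zero_right] at hw
      by_cases hw0 : w = 0
      · simp [hw0, hε]
      · have hwp := norm_pos_iff.2 hw0
        have h1 : r ≤ ‖w⁻¹‖ := by
          rw [norm_inv]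
          exact (le_inv_comm₀ hr hwp).2 (hw.le.trans (min_le_left _ _))
        have h2 := h _ h1
        have h3 : 0 < ‖f w⁻¹‖ := norm_pos_iff.2 (hinv w
          (by rw [mem_closedBall_zero_iff]; exact hw.le.trans (min_le_right _ _)) hw0)
        simp only [hw0, if_true, if_false, dist_zero_right, norm_div]
        rw [div_lt_iff₀ h3]
        rw [div_mul_eq_mul_div, div_le_iff₀ hε] at h2
        nlinarith
    · apply ContinuousAt.continuousWithinAt
      have h1 : ContinuousAt (fun w : ℂ => g w⁻¹ / f w⁻¹) w := by
        have hi : ContinuousAt (fun w : ℂ => w⁻¹) w := continuousAt_inv₀ hw0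
        exact ContinuousAt.div (hg.continuousAt.comp (f := fun w : ℂ => w⁻¹) hi)
          (hf.continuousAt.comp (f := fun w : ℂ => w⁻¹) hi) (hinv w hw hw0)
      refine h1.congr ?_
      filter_upwards [isOpen_ne.mem_nhds hw0] with x hx
      have hx : x ≠ 0 := hx
      simp [hx]
  · intro z _
    refine ⟨fun h => hfg z ?_, rfl⟩
    simpa using h
  · intro w hw
    refine ⟨by simp, ?_⟩
    by_cases hw0 : w = 0
    · subst hw0; simp [mk]
    · have h6 : mk (1, w) = ((w⁻¹ : ℂ) : OnePoint ℂ) := by simp [mk, hw0]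
      rw [h6, sph_coe]
      have := hinv w hw hw0
      rw [← mk_smul _ this]
      simp only [hw0, if_false]
      congr 1
      ext
      · simp
      · simp [mul_div_cancel₀ _ this]
  · intro z hz
    have hz0 : z ≠ 0 := norm_pos_iff.1 (by rw [hz]; exact hM)
    have := hfM z hz.ge
    simp [hz0]
    field_simp

end DW

/-- **Theorem 1.** Let `f, g : ℂ → ℂ` be continuous with no common zeros, with
`f(z)/g(z) → ∞` as `|z| → ∞`, and `f(z) ≠ 0` for `|z| ≥ M` (`M > 0`).  Let
`R : ℂ̄ → ℂ̄` be the continuous map equal to `f/g` where `g ≠ 0` and to `∞` where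
`g = 0` and at `∞`.  Then the degree of `R` equals the winding number about `0`
of the loop `φ ↦ f(M e^{iφ})`, `φ ∈ [0, 2π]`. -/
theorem degree_eq_winding_number_of_boundary_loop
    (f g : ℂ → ℂ) (hf : Continuous f) (hg : Continuous g)
    (hfg : ∀ z : ℂ, ¬(f z = 0 ∧ g z = 0))
    (hlim : ∀ C : ℝ, 0 < C → ∃ r : ℝ, 0 < r ∧ ∀ z : ℂ, r ≤ ‖z‖ → C * ‖g z‖ ≤ ‖f z‖)
    (M : ℝ) (hM : 0 < M) (hfM : ∀ z : ℂ, M ≤ ‖z‖ → f z ≠ 0)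
    (R : OnePoint ℂ → OnePoint ℂ) (hRcont : Continuous R)
    (hR₁ : ∀ z : ℂ, g z ≠ 0 → R z = ((f z / g z : ℂ) : OnePoint ℂ))
    (hR₂ : ∀ z : ℂ, g z = 0 → R z = ∞)
    (hRinf : R ∞ = ∞) :
    ∀ n : ℤ, HasDegree R n ↔
      IsWindingNumber (fun φ : ℝ => f ((M : ℂ) * Complex.exp ((φ : ℂ) * Complex.I))) n := by
  have hRs : R = DW.sph fun z => (f z, g z) := by
    ext1 z
    induction z using OnePoint.rec with
    | infty => rw [hRinf]; rfl
    | coe z =>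
      rw [DW.sph_coe]
      by_cases h : g z = 0
      · rw [hR₂ z h]; simp [DW.mk, h]
      · rw [hR₁ z h]; simp [DW.mk, h]
  intro n
  subst hRs
  constructor
  · intro h
    exact DW.lift_std hM ((DW.lift_pair f g hf hg hfg hlim M hM hfM).hty hM h)
  · intro h
    exact DW.dir1 f g hf hg hfg hlim M hM hfM n h
end

section
/- Let f(z, z̄) and g(z, z̄) be complex polynomials in z and z̄ with no common zeros, with deg f ≥ deg g. Let d = deg f and let T(z, z̄) be the homogeneous component of f of degree d. Assume |T(z, z̄)| → ∞ as |z| → ∞. Let R : ℂ̄ → ℂ̄ be the continuous map defined by R(z) = f(z,z̄)/g(z,z̄) when g(z,z̄) ≠ 0, R(z) = ∞ when g(z,z̄) = 0, and R(∞) = lim_{|z|→∞} f/g. Then the degree of R equals the number of roots, counted with multiplicity, of the one-variable polynomial T̃(z) = z^d · T(z, z^{-1}) lying in the open unit disk, minus d. -/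
open Complex Topology unitInterval Filter OnePoint
open scoped OnePoint

/-- Evaluation of a polynomial `f(z, z̄)` in `z` and `z̄` at the point `z ∈ ℂ`
(the first variable gets `z`, the second gets `z̄`). -/
noncomputable def evalZZbar (f : MvPolynomial (Fin 2) ℂ) (z : ℂ) : ℂ :=
  MvPolynomial.eval ![z, (starRingEnd ℂ) z] f


def Hmt (A B : OnePoint ℂ → OnePoint ℂ) : Prop :=
  ∃ H : OnePoint ℂ × I → OnePoint ℂ, Continuous H ∧
    (∀ z, H (z, 0) = A z) ∧ (∀ z, H (z, 1) = B z)

lemma Hmt.trans {A B C : OnePoint ℂ → OnePoint ℂ} (h1 : Hmt A B) (h2 : Hmt B C) : Hmt A C := by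
  obtain ⟨H, hH, hA, hB⟩ := h1
  obtain ⟨K, hK, kB, kC⟩ := h2
  have cA : Continuous A := by
    have : A = fun z => H (z, 0) := by funext z; exact (hA z).symm
    rw [this]; fun_prop
  have cB : Continuous B := by
    have : B = fun z => H (z, 1) := by funext z; exact (hB z).symm
    rw [this]; fun_prop
  have cC : Continuous C := by
    have : C = fun z => K (z, 1) := by funext z; exact (kC z).symm
    rw [this]; fun_prop
  let F : ContinuousMap.Homotopy (⟨A, cA⟩ : C(OnePoint ℂ, OnePoint ℂ)) ⟨B, cB⟩ :=
    { toFun := fun p => H (p.2, p.1), continuous_toFun := by fun_prop,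
      map_zero_left := hA, map_one_left := hB }
  let G : ContinuousMap.Homotopy (⟨B, cB⟩ : C(OnePoint ℂ, OnePoint ℂ)) ⟨C, cC⟩ :=
    { toFun := fun p => K (p.2, p.1), continuous_toFun := by fun_prop,
      map_zero_left := kB, map_one_left := kC }
  refine ⟨fun p => (F.trans G) (p.2, p.1), by fun_prop, fun z => ?_, fun z => ?_⟩
  · exact (F.trans G).apply_zero z
  · exact (F.trans G).apply_one z

open Classical in
noncomputable def mkS (p : ℂ × ℂ) : OnePoint ℂ :=
  if p.2 = 0 then ∞ else ((p.1 / p.2 : ℂ) : OnePoint ℂ)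

lemma mkS_continuousAt (p : ℂ × ℂ) (hp : ¬ (p.1 = 0 ∧ p.2 = 0)) : ContinuousAt mkS p := by
  by_cases h : p.2 = 0
  · have h1 : p.1 ≠ 0 := fun h' => hp ⟨h', h⟩
    have hv : mkS p = ∞ := by simp [mkS, h]
    rw [ContinuousAt, hv, OnePoint.hasBasis_nhds_infty.tendsto_right_iff]
    rintro s ⟨-, hs⟩
    obtain ⟨M, hM⟩ := hs.isBounded.exists_norm_le
    have hc : Continuous fun q : ℂ × ℂ => ‖q.1‖ - M * ‖q.2‖ := by fun_prop
    have hpos : 0 < ‖p.1‖ - M * ‖p.2‖ := by simpa [h] using h1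
    filter_upwards [hc.continuousAt.eventually (lt_mem_nhds hpos)] with q hq
    by_cases hq2 : q.2 = 0
    · right; simp [mkS, hq2]
    · left
      refine ⟨q.1 / q.2, fun hmem => ?_, by simp [mkS, hq2]⟩
      have := hM _ hmem
      rw [norm_div, div_le_iff₀ (norm_pos_iff.2 hq2)] at this
      linarith
  · have : mkS =ᶠ[𝓝 p] fun q => ((q.1 / q.2 : ℂ) : OnePoint ℂ) := by
      have : ∀ᶠ q : ℂ × ℂ in 𝓝 p, q.2 ≠ 0 := continuous_snd.continuousAt.eventually_ne h
      filter_upwards [this] with q hq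
      simp [mkS, hq]
    refine ContinuousAt.congr ?_ this.symm
    exact (OnePoint.continuous_coe.continuousAt).comp
      (continuous_fst.continuousAt.div continuous_snd.continuousAt h)

noncomputable def glueS (P Q : ℂ × I → ℂ) (L : I → ℂ) : OnePoint ℂ × I → OnePoint ℂ :=
  fun p => p.1.elim (mkS (1, L p.2)) (fun z => mkS (P (z, p.2), Q (z, p.2)))

lemma glueS_continuous (P Q : ℂ × I → ℂ) (L : I → ℂ) (hP : Continuous P) (hQ : Continuous Q)
    (hL : Continuous L) (h0 : ∀ p, ¬ (P p = 0 ∧ Q p = 0))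
    (hP' : ∀ t : I, ∀ᶠ p in cocompact ℂ ×ˢ 𝓝 t, P p ≠ 0)
    (hQ' : ∀ t : I, Tendsto (fun p => Q p / P p) (cocompact ℂ ×ˢ 𝓝 t) (𝓝 (L t))) :
    Continuous (glueS P Q L) := by
  rw [continuous_iff_continuousAt]
  rintro ⟨x, t⟩
  induction x using OnePoint.rec with
  | infty =>
    have hc : Tendsto (fun s : ℂ => mkS (1, s)) (𝓝 (L t)) (𝓝 (mkS (1, L t))) := by
      have := mkS_continuousAt (1, L t) (by simp)
      exact this.tendsto.comp (by fun_prop : Continuous fun s : ℂ => ((1 : ℂ), s)).continuousAt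
    rw [ContinuousAt, nhds_prod_eq, OnePoint.nhds_infty_eq, Filter.sup_prod, tendsto_sup]
    constructor
    · rw [← Filter.map_id (f := 𝓝 t), Filter.prod_map_map_eq, tendsto_map'_iff,
        Filter.coclosedCompact_eq_cocompact]
      refine (hc.comp (hQ' t)).congr' ?_
      filter_upwards [hP' t] with p hp
      obtain ⟨z, s⟩ := p
      by_cases hq : Q (z, s) = 0
      · simp [glueS, mkS, hq]
      · simp [glueS, mkS, hp, hq]
    · rw [Filter.pure_prod, tendsto_map'_iff]
      exact hc.comp hL.continuousAt
  | coe z =>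
    have he : IsOpenEmbedding (Prod.map ((↑) : ℂ → OnePoint ℂ) (id : I → I)) :=
      OnePoint.isOpenEmbedding_coe.prodMap IsOpenEmbedding.id
    refine (he.continuousAt_iff (x := (z, t))).1 ?_
    exact ContinuousAt.comp (g := mkS) (f := fun p => (P p, Q p)) (mkS_continuousAt _ (h0 _))
      (by fun_prop)

/-- homotopy between rational expressions -/
lemma hmt_of (P Q : ℂ × I → ℂ) (L : I → ℂ) (hP : Continuous P) (hQ : Continuous Q)
    (hL : Continuous L) (h0 : ∀ p, ¬ (P p = 0 ∧ Q p = 0))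
    (hP' : ∀ t : I, ∀ᶠ p in cocompact ℂ ×ˢ 𝓝 t, P p ≠ 0)
    (hQ' : ∀ t : I, Tendsto (fun p => Q p / P p) (cocompact ℂ ×ˢ 𝓝 t) (𝓝 (L t))) :
    Hmt (fun x => x.elim (mkS (1, L 0)) (fun z => mkS (P (z, 0), Q (z, 0))))
      (fun x => x.elim (mkS (1, L 1)) (fun z => mkS (P (z, 1), Q (z, 1)))) :=
  ⟨_, glueS_continuous P Q L hP hQ hL h0 hP' hQ', fun _ => rfl, fun _ => rfl⟩

/-- Extension of a plane map by `∞ ↦ ∞`. -/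
noncomputable def ext8 (F : ℂ → ℂ) : OnePoint ℂ → OnePoint ℂ :=
  fun x => x.elim ∞ (fun z => ((F z : ℂ) : OnePoint ℂ))

lemma hmt_ext (P : ℂ × I → ℂ) (hP : Continuous P)
    (hP' : ∀ t : I, Tendsto (fun p => ‖P p‖) (cocompact ℂ ×ˢ 𝓝 t) atTop) :
    Hmt (ext8 fun z => P (z, 0)) (ext8 fun z => P (z, 1)) := by
  have := hmt_of P (fun _ => 1) (fun _ => 0) hP continuous_const continuous_const (by simp)
    (fun t => ((hP' t).eventually_gt_atTop 0).mono fun p hp => norm_pos_iff.1 hp)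
    (fun t => by
      simp only [one_div]
      exact tendsto_inv₀_cobounded.comp (tendsto_norm_atTop_iff_cobounded.1 (hP' t)))
  unfold ext8; simpa [mkS] using this

lemma evalZZbar_contDiff (f : MvPolynomial (Fin 2) ℂ) : ContDiff ℝ 1 (evalZZbar f) := by
  unfold evalZZbar
  induction f using MvPolynomial.induction_on with
  | C a => simpa using contDiff_const
  | add p q hp hq => simpa using hp.add hq
  | mul_X p i hp =>
    simp only [map_mul, MvPolynomial.eval_X]
    refine hp.mul ?_
    fin_cases i
    · exact contDiff_id
    · exact Complex.conjCLE.contDiff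

lemma evalZZbar_hom (T : MvPolynomial (Fin 2) ℂ) (d : ℕ) (hT : T.IsHomogeneous d) (r : ℝ) (w : ℂ) :
    evalZZbar T (r * w) = (r : ℂ) ^ d * evalZZbar T w := by
  unfold evalZZbar
  rw [MvPolynomial.eval_eq', MvPolynomial.eval_eq', Finset.mul_sum]
  refine Finset.sum_congr rfl fun m hm => ?_
  have h1 := hT.degree_eq_sum_deg_support hm
  have h1' : d = m 0 + m 1 := by
    rw [h1, ← Fin.sum_univ_two]
    exact Finset.sum_subset (Finset.subset_univ _) (by simp)
  clear h1
  subst h1'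
  simp [Fin.prod_univ_two, mul_pow, pow_add]
  ring

lemma evalZZbar_bound (h : MvPolynomial (Fin 2) ℂ) (k : ℕ) (hk : h.totalDegree ≤ k) :
    ∃ C : ℝ, 0 ≤ C ∧ ∀ z : ℂ, 1 ≤ ‖z‖ → ‖evalZZbar h z‖ ≤ C * ‖z‖ ^ k := by
  refine ⟨∑ m ∈ h.support, ‖h.coeff m‖, by positivity, fun z hz => ?_⟩
  unfold evalZZbar
  rw [MvPolynomial.eval_eq', Finset.sum_mul]
  refine (norm_sum_le _ _).trans (Finset.sum_le_sum fun m hm => ?_)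
  have h1 := (MvPolynomial.le_totalDegree hm).trans hk
  rw [Finsupp.sum_fintype _ _ (by simp)] at h1
  simp [Fin.sum_univ_two] at h1
  simp [Fin.prod_univ_two, ← pow_add]
  gcongr

lemma T_ne_zero (T : MvPolynomial (Fin 2) ℂ) (d : ℕ) (hT : T.IsHomogeneous d)
    (hTinf : Tendsto (fun z : ℂ => ‖evalZZbar T z‖) (cocompact ℂ) atTop) (z : ℂ) (hz : z ≠ 0) :
    evalZZbar T z ≠ 0 := by
  intro h0
  have h1 : Tendsto (fun r : ℝ => (r : ℂ) * z) atTop (cocompact ℂ) := by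
    rw [← Metric.cobounded_eq_cocompact, ← tendsto_norm_atTop_iff_cobounded]
    simp only [norm_mul, Complex.norm_real, Real.norm_eq_abs]
    exact tendsto_abs_atTop_atTop.atTop_mul_const (norm_pos_iff.2 hz)
  have h2 := hTinf.comp h1
  simp only [Function.comp_def, evalZZbar_hom T d hT, h0] at h2
  simp at h2
  exact not_tendsto_const_atTop (0:ℝ) atTop h2

lemma T_lower (T : MvPolynomial (Fin 2) ℂ) (d : ℕ) (hT : T.IsHomogeneous d)
    (h0 : ∀ z : ℂ, z ≠ 0 → evalZZbar T z ≠ 0) :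
    ∃ m : ℝ, 0 < m ∧ ∀ z, z ≠ 0 → m * ‖z‖ ^ d ≤ ‖evalZZbar T z‖ := by
  obtain ⟨w, hw, hmin⟩ := (isCompact_sphere (0:ℂ) 1).exists_isMinOn
    (NormedSpace.sphere_nonempty.2 zero_le_one) ((evalZZbar_contDiff T).continuous.norm.continuousOn)
  have hw0 : w ≠ 0 := by
    rintro rfl; simp at hw
  refine ⟨_, norm_pos_iff.2 (h0 w hw0), fun z hz => ?_⟩
  have hz' : ‖z‖ ≠ 0 := norm_ne_zero_iff.2 hz
  have h1 : z = (‖z‖ : ℂ) * (z / ‖z‖) := by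
    rw [mul_div_cancel₀]; exact_mod_cast hz'
  have h2 : z / (‖z‖ : ℂ) ∈ Metric.sphere (0:ℂ) 1 := by
    simp [hz']
  have h3 := hmin h2
  simp only [Set.mem_ofPred_eq] at h3
  rw [h1, evalZZbar_hom T d hT, ← h1]
  simp only [norm_mul, norm_pow, Complex.norm_real, norm_norm]
  rw [mul_comm]
  gcongr

lemma norm_atTop : Tendsto (fun z : ℂ => ‖z‖) (cocompact ℂ) atTop := tendsto_norm_cocompact_atTop

lemma asymp (T h : MvPolynomial (Fin 2) ℂ) (d : ℕ) (hd : 0 < d) (hT : T.IsHomogeneous d)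
    (h0 : ∀ z : ℂ, z ≠ 0 → evalZZbar T z ≠ 0) (hh : h.totalDegree ≤ d - 1) :
    ∃ m : ℝ, 0 < m ∧ ∀ K : ℝ, ∀ᶠ z in cocompact ℂ,
      m * ‖z‖ ^ d ≤ ‖evalZZbar T z‖ - ‖evalZZbar h z‖ - K := by
  obtain ⟨m, hm, hmT⟩ := T_lower T d hT h0
  obtain ⟨C, hC, hCh⟩ := evalZZbar_bound h (d - 1) hh
  refine ⟨m / 2, by positivity, fun K => ?_⟩
  have e1 : ∀ᶠ z : ℂ in cocompact ℂ, (C + |K|) / (m / 2) ≤ ‖z‖ := norm_atTop.eventually_ge_atTop _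
  filter_upwards [e1, norm_atTop.eventually_ge_atTop 1] with z h1 h2
  have hz : z ≠ 0 := by rintro rfl; norm_num at h2
  have h3 := hmT z hz
  have h4 := hCh z h2
  rw [div_le_iff₀ (by positivity)] at h1
  obtain ⟨k, rfl⟩ : ∃ k, d = k + 1 := ⟨d - 1, by omega⟩
  simp only [Nat.add_sub_cancel] at h4
  rw [pow_succ] at *
  have h5 : 1 ≤ ‖z‖ ^ k := one_le_pow₀ h2
  have h6 : K ≤ |K| * ‖z‖ ^ k := by nlinarith [le_abs_self K, abs_nonneg K]
  nlinarith

lemma sub_top (f : MvPolynomial (Fin 2) ℂ) :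
    (f - MvPolynomial.homogeneousComponent f.totalDegree f).totalDegree ≤ f.totalDegree - 1 := by
  have := MvPolynomial.sum_homogeneousComponent f
  rw [Finset.sum_range_succ] at this
  nth_rewrite 1 [← this]
  rw [add_sub_cancel_right]
  refine MvPolynomial.totalDegree_finsetSum_le fun i hi => ?_
  have := (MvPolynomial.homogeneousComponent_isHomogeneous i f).totalDegree_le
  have := Finset.mem_range.1 hi
  omega

/-- generic constant -/
lemma exists_generic (f g : MvPolynomial (Fin 2) ℂ) :
    ∃ e c : ℂ, ‖c - 1‖ < 1 ∧ ∀ (z : ℂ) (u : ℝ),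
      ¬ (e = -u * evalZZbar f z ∧ c = (1 - u) * evalZZbar g z) := by
  let Φ : ℂ × ℝ → ℂ × ℂ := fun p =>
    (-(p.2 : ℂ) * evalZZbar f p.1, (1 - (p.2 : ℂ)) * evalZZbar g p.1)
  have hf := evalZZbar_contDiff f
  have hg := evalZZbar_contDiff g
  have ho : ContDiff ℝ 1 (fun p : ℂ × ℝ => (p.2 : ℂ)) :=
    Complex.ofRealCLM.contDiff.comp contDiff_snd
  have hΦ : ContDiff ℝ 1 Φ :=
    (ho.neg.mul (hf.comp contDiff_fst)).prodMk
      ((contDiff_const.sub ho).mul (hg.comp contDiff_fst))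
  have hdense := hΦ.dense_compl_range_of_finrank_lt_finrank (by simp [Complex.finrank_real_complex])
  obtain ⟨q, hq, hq'⟩ := hdense.exists_mem_open
    (U := {q : ℂ × ℂ | ‖q.2 - 1‖ < 1}) (isOpen_lt (by fun_prop) (by fun_prop)) ⟨(0, 1), by simp⟩
  refine ⟨q.1, q.2, hq', fun z u hu => hq ⟨(z, u), ?_⟩⟩
  exact Prod.ext hu.1.symm hu.2.symm

noncomputable def invS (x : OnePoint ℂ) : ℂ := x.elim 0 (fun z => z⁻¹)

lemma invS_continuousAt (x : OnePoint ℂ) (hx : x ≠ ((0 : ℂ) : OnePoint ℂ)) :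
    ContinuousAt invS x := by
  induction x using OnePoint.rec with
  | infty =>
    rw [OnePoint.continuousAt_infty', Filter.coclosedCompact_eq_cocompact,
      ← Metric.cobounded_eq_cocompact]
    exact tendsto_inv₀_cobounded
  | coe z =>
    rw [OnePoint.continuousAt_coe]
    exact continuousAt_inv₀ (by simpa using hx)

lemma mkS_invS (x : OnePoint ℂ) (hx : x ≠ ((0 : ℂ) : OnePoint ℂ)) : mkS (1, invS x) = x := by
  induction x using OnePoint.rec with
  | infty => simp [mkS, invS]
  | coe z =>
    have : z ≠ 0 := by simpa using hx
    simp [mkS, invS, this]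

lemma mkS_mul (a b c : ℂ) (hc : c ≠ 0) : mkS (c * a, c * b) = mkS (a, b) := by
  by_cases h : b = 0
  · simp [mkS, h]
  · simp [mkS, h, hc, mul_div_mul_left]

lemma cong_hmt {A A' B B' : OnePoint ℂ → OnePoint ℂ} (h : Hmt A B) (h1 : A = A') (h2 : B = B') :
    Hmt A' B' := by subst h1; subst h2; exact h

lemma step1 (F G : ℂ → ℂ) (hF : Continuous F) (hG : Continuous G)
    (hfg : ∀ z, ¬ (F z = 0 ∧ G z = 0)) (e c : ℂ) (hc : c ≠ 0)
    (hgen : ∀ (z : ℂ) (u : ℝ), ¬ (e = -u * F z ∧ c = (1 - u) * G z))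
    (hFinf : Tendsto (fun z => ‖F z‖) (cocompact ℂ) atTop)
    (B : ℝ) (hB : ∀ᶠ z in cocompact ℂ, ‖G z‖ ≤ B * ‖F z‖)
    (R : OnePoint ℂ → OnePoint ℂ) (hRcont : Continuous R)
    (hR : ∀ z : ℂ, R z = mkS (F z, G z)) :
    Hmt R (ext8 fun z => (F z + e) / c) := by
  have hFne : ∀ᶠ z in cocompact ℂ, F z ≠ 0 :=
    (hFinf.eventually_gt_atTop 0).mono fun z hz => norm_pos_iff.1 hz
  have hRt : Tendsto (fun z : ℂ => R z) (cocompact ℂ) (𝓝 (R ∞)) := by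
    have := OnePoint.continuousAt_infty'.1 (hRcont.continuousAt (x := ∞))
    rwa [Filter.coclosedCompact_eq_cocompact] at this
  have hR0 : R ∞ ≠ ((0 : ℂ) : OnePoint ℂ) := by
    intro h0
    rw [h0, OnePoint.nhds_coe_eq] at hRt
    have hb : Set.image ((↑) : ℂ → OnePoint ℂ) (Metric.ball 0 (1 / (|B| + 1))) ∈
        Filter.map ((↑) : ℂ → OnePoint ℂ) (𝓝 0) :=
      Filter.image_mem_map (Metric.ball_mem_nhds _ (by positivity))
    obtain ⟨z, ⟨⟨w, hw, hwz⟩, hz1⟩, hz2⟩ := (((hRt.eventually hb).and hB).and hFne).exists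
    rw [hR z] at hwz
    unfold mkS at hwz
    by_cases hg : G z = 0
    · simp [hg] at hwz
    · simp only [hg, if_false, OnePoint.coe_eq_coe] at hwz
      subst hwz
      have hg' := norm_pos_iff.2 hg
      have hf' := norm_pos_iff.2 hz2
      rw [mem_ball_zero_iff, norm_div, div_lt_div_iff₀ hg' (by positivity)] at hw
      nlinarith [le_abs_self B]
  have hL : Tendsto (fun z => G z / F z) (cocompact ℂ) (𝓝 (invS (R ∞))) := by
    refine ((invS_continuousAt _ hR0).tendsto.comp hRt).congr fun z => ?_
    simp only [Function.comp, hR z]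
    by_cases hg : G z = 0
    · simp [mkS, invS, hg]
    · simp [mkS, invS, hg]
  have hFi : Tendsto (fun z => (F z)⁻¹) (cocompact ℂ) (𝓝 0) :=
    tendsto_inv₀_cobounded.comp (tendsto_norm_atTop_iff_cobounded.1 hFinf)
  have key := hmt_of (fun p => F p.1 + ((p.2 : ℝ) : ℂ) * e)
    (fun p => (1 - ((p.2 : ℝ) : ℂ)) * G p.1 + ((p.2 : ℝ) : ℂ) * c)
    (fun t => (1 - ((t : ℝ) : ℂ)) * invS (R ∞)) (by fun_prop) (by fun_prop) (by fun_prop)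
    (by
      rintro ⟨z, t⟩ ⟨h1, h2⟩
      simp only at h1 h2
      by_cases ht : (t : ℝ) = 0
      · simp only [ht] at h1 h2
        exact hfg z ⟨by simpa using h1, by simpa using h2⟩
      · have ht' : ((t : ℝ) : ℂ) ≠ 0 := by exact_mod_cast ht
        refine hgen z ((t : ℝ)⁻¹) ⟨?_, ?_⟩
        · push_cast; field_simp; linear_combination h1
        · push_cast; field_simp; linear_combination h2)
    (by
      intro t
      have : ∀ᶠ z in cocompact ℂ, ‖e‖ < ‖F z‖ := hFinf.eventually_gt_atTop _
      filter_upwards [this.prod_inl (𝓝 t)] with p hp h0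
      have h1 : F p.1 = -(((p.2 : ℝ) : ℂ) * e) := by linear_combination h0
      have h2 : ‖F p.1‖ ≤ ‖e‖ := by
        rw [h1, norm_neg, norm_mul, Complex.norm_real, Real.norm_eq_abs, abs_of_nonneg p.2.2.1]
        exact mul_le_of_le_one_left (norm_nonneg _) p.2.2.2
      linarith)
    (by
      intro t
      have tt : Tendsto (fun p : ℂ × I => ((p.2 : ℝ) : ℂ)) (cocompact ℂ ×ˢ 𝓝 t)
          (𝓝 ((t : ℝ) : ℂ)) :=
        ((by fun_prop : Continuous fun s : I => ((s : ℝ) : ℂ)).tendsto t).comp tendsto_snd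
      have l1 := hL.comp (tendsto_fst (f := cocompact ℂ) (g := 𝓝 t))
      have l2 := hFi.comp (tendsto_fst (f := cocompact ℂ) (g := 𝓝 t))
      have num := ((tt.const_sub 1).mul l1).add ((tt.mul_const c).mul l2)
      have den := ((tt.mul_const e).mul l2).const_add 1
      have := num.div den (by simp)
      simp only [mul_zero, add_zero, div_one] at this
      refine this.congr' ?_
      filter_upwards [hFne.prod_inl (𝓝 t)] with p hp
      simp only [Function.comp, Pi.div_apply]
      rw [← mul_div_mul_left _ _ hp]
      congr 1 <;> field_simp)
  refine cong_hmt key ?_ ?_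
  · funext x
    induction x using OnePoint.rec with
    | infty => simp [mkS_invS _ hR0]
    | coe z => simp [hR z]
  · funext x
    induction x using OnePoint.rec with
    | infty => simp [ext8, mkS]
    | coe z => simp [ext8, mkS, hc]

lemma tendsto_lower (P : ℂ × I → ℂ) (m : ℝ) (hm : 0 < m) (d : ℕ) (hd : 0 < d)
    (h : ∀ᶠ z in cocompact ℂ, ∀ t : I, m * ‖z‖ ^ d ≤ ‖P (z, t)‖) (t : I) :
    Tendsto (fun p => ‖P p‖) (cocompact ℂ ×ˢ 𝓝 t) atTop := by
  have h1 : Tendsto (fun z : ℂ => m * ‖z‖ ^ d) (cocompact ℂ) atTop :=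
    (((tendsto_pow_atTop hd.ne').comp norm_atTop).const_mul_atTop hm)
  refine tendsto_atTop_mono' _ ?_ (h1.comp (tendsto_fst (f := cocompact ℂ) (g := 𝓝 t)))
  filter_upwards [h.prod_inl (𝓝 t)] with p hp
  exact hp p.2

lemma radial_cont (d : ℕ) (hd : 0 < d) (F : ℂ × I → ℂ) (hF : Continuous F) :
    Continuous (fun p : ℂ × I => ((‖p.1‖ : ℂ)) ^ d * F (p.1 / ‖p.1‖, p.2)) := by
  have hw : ∀ z : ℂ, z ≠ 0 → ‖z / (‖z‖ : ℂ)‖ = 1 := by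
    intro z hz
    simp [norm_ne_zero_iff.2 hz]
  have hw' : ∀ z : ℂ, ‖z / (‖z‖ : ℂ)‖ ≤ 1 := by
    intro z
    by_cases hz : z = 0
    · simp [hz]
    · exact (hw z hz).le
  rw [continuous_iff_continuousAt]
  rintro ⟨z, t⟩
  by_cases hz : z = 0
  · subst hz
    obtain ⟨M, hM⟩ := ((isCompact_closedBall (0:ℂ) 1).prod (isCompact_univ (X := I))).exists_bound_of_continuousOn hF.continuousOn
    rw [ContinuousAt]
    have : ((‖(0:ℂ)‖ : ℂ)) ^ d * F (0 / ‖(0:ℂ)‖, t) = 0 := by simp [hd.ne']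
    simp only [this]
    have hc : Continuous fun p : ℂ × I => ‖p.1‖ ^ d * M := by fun_prop
    have := hc.tendsto (0, t)
    simp only [norm_zero, zero_pow hd.ne', zero_mul] at this
    refine squeeze_zero_norm (fun p => ?_) this
    rw [norm_mul, norm_pow, Complex.norm_real, norm_norm]
    gcongr
    exact hM _ ⟨by simpa using hw' p.1, trivial⟩
  · have hz' : (‖z‖ : ℂ) ≠ 0 := by exact_mod_cast norm_ne_zero_iff.2 hz
    have c1 : ContinuousAt (fun p : ℂ × I => (‖p.1‖ : ℂ)) (z, t) := by fun_prop
    have c2 : ContinuousAt (fun p : ℂ × I => (p.1 / (‖p.1‖ : ℂ), p.2)) (z, t) :=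
      (continuousAt_fst.div c1 hz').prodMk continuousAt_snd
    exact (c1.pow d).mul (ContinuousAt.comp (g := F) hF.continuousAt c2)

/-- radial homotopies -/
lemma hmt_radial (d : ℕ) (hd : 0 < d) (F : ℂ × I → ℂ) (hF : Continuous F)
    (h0 : ∀ w : ℂ, ‖w‖ = 1 → ∀ t, F (w, t) ≠ 0) :
    Hmt (ext8 fun z => ((‖z‖ : ℂ)) ^ d * F (z / ‖z‖, 0))
      (ext8 fun z => ((‖z‖ : ℂ)) ^ d * F (z / ‖z‖, 1)) := by
  have hw : ∀ z : ℂ, z ≠ 0 → ‖z / (‖z‖ : ℂ)‖ = 1 := by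
    intro z hz
    simp [norm_ne_zero_iff.2 hz]
  refine hmt_ext (fun p => ((‖p.1‖ : ℂ)) ^ d * F (p.1 / ‖p.1‖, p.2)) (radial_cont d hd F hF) ?_
  · obtain ⟨q, hq, hmin⟩ := ((isCompact_sphere (0:ℂ) 1).prod (isCompact_univ (X := I))).exists_isMinOn
      ⟨(1, 0), by simp⟩ hF.norm.continuousOn
    have hq1 : ‖q.1‖ = 1 := by simpa using hq.1
    refine tendsto_lower _ ‖F q‖ (norm_pos_iff.2 (h0 q.1 hq1 q.2)) d hd ?_
    filter_upwards [norm_atTop.eventually_gt_atTop 0] with z hz t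
    rw [norm_mul, norm_pow, Complex.norm_real, norm_norm, mul_comm]
    gcongr
    exact hmin (show (z / (‖z‖ : ℂ), t) ∈ _ from ⟨by simpa using hw z (norm_pos_iff.1 hz), trivial⟩)

/-- root pushing -/
noncomputable def pushF (S : Multiset ℂ) (p : ℂ × I) : ℂ :=
  (S.map fun a => if ‖a‖ < 1 then p.1 - (1 - ((p.2 : ℝ) : ℂ)) * a
    else (1 - ((p.2 : ℝ) : ℂ)) * p.1 - a).prod

lemma pushF_cont (S : Multiset ℂ) : Continuous (pushF S) := by
  unfold pushF
  refine continuous_multiset_prod _ fun a _ => ?_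
  split_ifs <;> fun_prop

lemma pushF_ne (S : Multiset ℂ) (hS : ∀ a ∈ S, ‖a‖ ≠ 1) (w : ℂ) (hw : ‖w‖ = 1) (t : I) :
    pushF S (w, t) ≠ 0 := by
  unfold pushF
  rw [Ne, Multiset.prod_eq_zero_iff, Multiset.mem_map]
  rintro ⟨a, ha, h⟩
  have ht : ‖(1 - ((t : ℝ) : ℂ))‖ ≤ 1 := by
    have : (1 - ((t : ℝ) : ℂ)) = ((1 - (t : ℝ) : ℝ) : ℂ) := by push_cast; rfl
    rw [this, Complex.norm_real, Real.norm_eq_abs, abs_le]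
    constructor <;> linarith [t.2.1, t.2.2]
  have ha' := hS a ha
  dsimp only at h
  split_ifs at h with h1
  · have h2 : ‖w‖ ≤ ‖a‖ := by
      rw [sub_eq_zero.1 h, norm_mul]
      exact mul_le_of_le_one_left (norm_nonneg _) ht
    linarith
  · have h2 : ‖a‖ ≤ ‖w‖ := by
      rw [← sub_eq_zero.1 h, norm_mul]
      exact mul_le_of_le_one_left (norm_nonneg _) ht
    rw [hw] at h2
    exact ha' (le_antisymm h2 (not_lt.1 h1))

lemma pushF_zero (S : Multiset ℂ) (w : ℂ) : pushF S (w, 0) = (S.map fun a => w - a).prod := by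
  simp [pushF]

lemma pushF_one (S : Multiset ℂ) (hS : ∀ a ∈ S, ‖a‖ ≠ 1) : ∃ K : ℂ, K ≠ 0 ∧ ∀ w,
    pushF S (w, 1) = K * w ^ (S.filter fun z => ‖z‖ < 1).card := by
  induction S using Multiset.induction_on with
  | empty => exact ⟨1, one_ne_zero, fun w => by simp [pushF]⟩
  | cons a S ih =>
    obtain ⟨K, hK, h⟩ := ih fun b hb => hS b (Multiset.mem_cons_of_mem hb)
    have hc : ∀ w, pushF (a ::ₘ S) (w, 1) = (if ‖a‖ < 1 then w else -a) * pushF S (w, 1) := by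
      intro w; simp [pushF]
    by_cases h1 : ‖a‖ < 1
    · refine ⟨K, hK, fun w => ?_⟩
      rw [hc, h, Multiset.filter_cons_of_pos (p := fun z : ℂ => ‖z‖ < 1) S h1, Multiset.card_cons, pow_succ, if_pos h1]; ring
    · refine ⟨-a * K, mul_ne_zero (neg_ne_zero.2 ?_) hK, fun w => ?_⟩
      · rintro rfl; simp at h1
      · rw [hc, h, Multiset.filter_cons_of_neg (p := fun z : ℂ => ‖z‖ < 1) S h1, if_neg h1]; ring

lemma exists_path (K : ℂ) (hK : K ≠ 0) : ∃ γ : I → ℂ, Continuous γ ∧ γ 0 = K ∧ γ 1 = 1 ∧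
    ∀ t, γ t ≠ 0 := by
  have h : IsPathConnected ({0}ᶜ : Set ℂ) :=
    isPathConnected_compl_singleton_of_one_lt_rank (by simp) 0
  obtain ⟨γ, hγ⟩ := h.joinedIn K hK 1 (by simp)
  exact ⟨γ, γ.continuous, γ.source, γ.target, hγ⟩

lemma step4 (d : ℕ) (hd : 0 < d) (S : Multiset ℂ) (hS : ∀ a ∈ S, ‖a‖ ≠ 1) (l : ℂ) (hl : l ≠ 0) :
    Hmt (ext8 fun z => ((‖z‖ : ℂ)) ^ d * ((starRingEnd ℂ) (z / ‖z‖) ^ d *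
        (l * (S.map fun a => z / ‖z‖ - a).prod)))
      (ext8 fun z => ((‖z‖ : ℂ)) ^ d * ((starRingEnd ℂ) (z / ‖z‖) ^ d *
        (z / ‖z‖) ^ (S.filter fun z => ‖z‖ < 1).card)) := by
  obtain ⟨K, hK, hp⟩ := pushF_one S hS
  obtain ⟨γ, hγ, g0, g1, hne⟩ := exists_path (l * K) (mul_ne_zero hl hK)
  have hc := pushF_cont S
  have h1 := hmt_radial d hd (fun p => (starRingEnd ℂ) p.1 ^ d * (l * pushF S p)) (by fun_prop)
    (fun w hw t => by
      have : w ≠ 0 := by rintro rfl; simp at hw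
      have := pushF_ne S hS w hw t
      simp_all)
  have h2 := hmt_radial d hd (fun p => (starRingEnd ℂ) p.1 ^ d *
      (γ p.2 * p.1 ^ (S.filter fun z => ‖z‖ < 1).card)) (by fun_prop)
    (fun w hw t => by
      have : w ≠ 0 := by rintro rfl; simp at hw
      have := hne t
      refine mul_ne_zero (pow_ne_zero _ ?_) (mul_ne_zero this (pow_ne_zero _ ?_)) <;> simpa)
  simp only [pushF_zero, hp, g0, g1, one_mul] at h1 h2
  simp only [← mul_assoc] at h1 h2 ⊢
  exact h1.trans h2

lemma std_infty (n : ℤ) : stdSphereMap n ∞ =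
    if n = 0 then ((1 : ℂ) : OnePoint ℂ) else (∞ : OnePoint ℂ) := rfl

lemma std_coe (n : ℤ) (w : ℂ) : stdSphereMap n (w : OnePoint ℂ) =
    if n = 0 then ((1 : ℂ) : OnePoint ℂ)
      else if 0 < n then ((w ^ n.toNat : ℂ) : OnePoint ℂ)
      else (((starRingEnd ℂ) w ^ (-n).toNat : ℂ) : OnePoint ℂ) := rfl

lemma hmt_pow (A B u : ℂ → ℂ) (hA : Continuous A) (hB : Continuous B) (a b : ℕ) (ha : 0 < a)
    (hb : 0 < b) (hu : ∀ z, z ≠ 0 → ‖u z‖ = 1) (hAu : ∀ z, z ≠ 0 → A z = (‖z‖ : ℂ) ^ a * u z)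
    (hBu : ∀ z, z ≠ 0 → B z = (‖z‖ : ℂ) ^ b * u z) : Hmt (ext8 A) (ext8 B) := by
  have := hmt_ext (fun p => (1 - ((p.2 : ℝ) : ℂ)) * A p.1 + ((p.2 : ℝ) : ℂ) * B p.1)
    (by fun_prop)
    (fun t => tendsto_lower _ 1 one_pos 1 one_pos (by
      filter_upwards [norm_atTop.eventually_ge_atTop 1] with z hz t
      have hz0 : z ≠ 0 := by rintro rfl; norm_num at hz
      have h1 : (1 - ((t : ℝ) : ℂ)) * A z + ((t : ℝ) : ℂ) * B z =
          (((1 - t) * ‖z‖ ^ a + t * ‖z‖ ^ b : ℝ) : ℂ) * u z := by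
        rw [hAu z hz0, hBu z hz0]; push_cast; ring
      rw [h1, norm_mul, hu z hz0, mul_one, Complex.norm_real, Real.norm_eq_abs, pow_one, one_mul]
      refine le_trans ?_ (le_abs_self _)
      have h2 : ‖z‖ ≤ ‖z‖ ^ a := le_self_pow₀ hz ha.ne'
      have h3 : ‖z‖ ≤ ‖z‖ ^ b := le_self_pow₀ hz hb.ne'
      nlinarith [t.2.1, t.2.2]) t)
  simpa using this

lemma hmt_const (d : ℕ) (hd : 0 < d) :
    Hmt (ext8 fun z => (‖z‖ : ℂ) ^ d) (fun _ => ((1 : ℂ) : OnePoint ℂ)) := by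
  have hpos : ∀ (z : ℂ) (t : I), ((t : ℝ) : ℂ) + (‖z‖ : ℂ) ^ d = 0 → (t : ℝ) = 0 ∧ ‖z‖ ^ d = 0 := by
    intro z t h
    have h' : (t : ℝ) + ‖z‖ ^ d = 0 := by exact_mod_cast h
    have := t.2.1
    have : 0 ≤ ‖z‖ ^ d := by positivity
    constructor <;> linarith
  have hne : ∀ᶠ z : ℂ in cocompact ℂ, ∀ t : I, ((t : ℝ) : ℂ) + (‖z‖ : ℂ) ^ d ≠ 0 := by
    filter_upwards [norm_atTop.eventually_gt_atTop 0] with z hz t h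
    exact (pow_pos hz d).ne' (hpos z t h).2
  have hinf : ∀ t : I, Tendsto (fun p : ℂ × I => ‖((p.2 : ℝ) : ℂ) + (‖p.1‖ : ℂ) ^ d‖)
      (cocompact ℂ ×ˢ 𝓝 t) atTop := fun t => by
    refine tendsto_lower (fun p => ((p.2 : ℝ) : ℂ) + (‖p.1‖ : ℂ) ^ d) 1 one_pos d hd ?_ t
    refine Eventually.of_forall fun z t => ?_
    have : ((t : ℝ) : ℂ) + (‖z‖ : ℂ) ^ d = ((t + ‖z‖ ^ d : ℝ) : ℂ) := by push_cast; rfl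
    rw [this, Complex.norm_real, Real.norm_eq_abs]
    refine le_trans ?_ (le_abs_self _)
    linarith [t.2.1]
  have key := hmt_of (fun p => ((p.2 : ℝ) : ℂ) + (‖p.1‖ : ℂ) ^ d)
    (fun p => 1 - ((p.2 : ℝ) : ℂ) + ((p.2 : ℝ) : ℂ) * (((p.2 : ℝ) : ℂ) + (‖p.1‖ : ℂ) ^ d))
    (fun t => ((t : ℝ) : ℂ)) (by fun_prop) (by fun_prop) (by fun_prop)
    (by
      rintro ⟨z, t⟩ ⟨h1, h2⟩
      have := (hpos z t h1).1
      simp [this] at h2)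
    (fun t => (hne.prod_inl (𝓝 t)).mono fun p hp => hp p.2)
    (by
      intro t
      have tt : Tendsto (fun p : ℂ × I => ((p.2 : ℝ) : ℂ)) (cocompact ℂ ×ˢ 𝓝 t)
          (𝓝 ((t : ℝ) : ℂ)) :=
        ((by fun_prop : Continuous fun s : I => ((s : ℝ) : ℂ)).tendsto t).comp tendsto_snd
      have l2 := tendsto_inv₀_cobounded.comp (tendsto_norm_atTop_iff_cobounded.1 (hinf t))
      have := ((tt.const_sub 1).mul l2).add tt
      simp only [mul_zero, zero_add] at this
      refine this.congr' ?_
      filter_upwards [hne.prod_inl (𝓝 t)] with p hp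
      have := hp p.2
      simp only [Function.comp]
      field_simp)
  refine cong_hmt key ?_ ?_
  · funext x
    induction x using OnePoint.rec with
    | infty => simp [ext8, mkS]
    | coe z => simp [ext8, mkS]
  · funext x
    induction x using OnePoint.rec with
    | infty => simp [mkS]
    | coe z =>
      have : (1 : ℂ) + (‖z‖ : ℂ) ^ d ≠ 0 := fun h => by
        have := (hpos z 1 (by simpa using h)).1
        simp at this
      simp [mkS, this]

lemma conj_mul_unit (z : ℂ) (hz : z ≠ 0) :
    (starRingEnd ℂ) (z / ‖z‖) * (z / ‖z‖) = 1 ∧ z = ‖z‖ * (z / ‖z‖) ∧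
      (starRingEnd ℂ) z = ‖z‖ * (starRingEnd ℂ) (z / ‖z‖) ∧ ‖z / (‖z‖ : ℂ)‖ = 1 := by
  have hz' : (‖z‖ : ℂ) ≠ 0 := by exact_mod_cast norm_ne_zero_iff.2 hz
  refine ⟨?_, ?_, ?_, ?_⟩
  · rw [mul_comm, Complex.mul_conj']
    simp [norm_ne_zero_iff.2 hz]
  · field_simp
  · simp only [map_div₀, Complex.conj_ofReal]; field_simp
  · simp [norm_ne_zero_iff.2 hz]

lemma step5 (d N : ℕ) (hd : 0 < d) :
    Hmt (ext8 fun z => ((‖z‖ : ℂ)) ^ d * ((starRingEnd ℂ) (z / ‖z‖) ^ d * (z / ‖z‖) ^ N))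
      (stdSphereMap ((N : ℤ) - (d : ℤ))) := by
  have hA : Continuous fun z : ℂ =>
      ((‖z‖ : ℂ)) ^ d * ((starRingEnd ℂ) (z / ‖z‖) ^ d * (z / ‖z‖) ^ N) :=
    (radial_cont d hd (fun p => (starRingEnd ℂ) p.1 ^ d * p.1 ^ N) (by fun_prop)).comp
      (by fun_prop : Continuous fun z : ℂ => (z, (0 : I)))
  rcases lt_trichotomy N d with h | h | h
  · obtain ⟨k, rfl⟩ : ∃ k, d = N + k := ⟨d - N, by omega⟩
    have hk : 0 < k := by omega
    have e : stdSphereMap ((N : ℤ) - ((N + k : ℕ) : ℤ)) = ext8 fun z => (starRingEnd ℂ) z ^ k := by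
      have : ((N : ℤ) - ((N + k : ℕ) : ℤ)) = -(k : ℤ) := by push_cast; ring
      rw [this]
      funext x
      induction x using OnePoint.rec with
      | infty => simp [std_infty, std_coe, ext8, hk.ne']
      | coe z => simp [std_infty, std_coe, ext8, hk.ne']
    rw [e]
    refine hmt_pow _ _ (fun z => (starRingEnd ℂ) (z / ‖z‖) ^ k) hA (by fun_prop) (N + k) k hd hk
      (fun z hz => ?_) (fun z hz => ?_) (fun z hz => ?_)
    · rw [norm_pow, RCLike.norm_conj, (conj_mul_unit z hz).2.2.2, one_pow]
    · have := (conj_mul_unit z hz).1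
      rw [pow_add ((starRingEnd ℂ) (z / ‖z‖)), mul_right_comm ((starRingEnd ℂ) (z / ‖z‖) ^ N),
        ← mul_pow, this, one_pow, one_mul]
    · rw [← mul_pow, ← (conj_mul_unit z hz).2.2.1]
  · subst h
    have e : stdSphereMap ((N : ℤ) - (N : ℤ)) = fun _ => ((1 : ℂ) : OnePoint ℂ) := by
      rw [sub_self]
      funext x
      induction x using OnePoint.rec with
      | infty => simp [std_infty, std_coe]
      | coe z => simp [std_infty, std_coe]
    rw [e]
    refine cong_hmt (hmt_const N hd) ?_ rfl
    congr 1
    funext z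
    by_cases hz : z = 0
    · simp [hz, hd.ne']
    · rw [← mul_pow ((starRingEnd ℂ) (z / ‖z‖)), (conj_mul_unit z hz).1, one_pow, mul_one]
  · obtain ⟨k, rfl⟩ : ∃ k, N = d + k := ⟨N - d, by omega⟩
    have hk : 0 < k := by omega
    have e : stdSphereMap (((d + k : ℕ) : ℤ) - (d : ℤ)) = ext8 fun z => z ^ k := by
      have : (((d + k : ℕ) : ℤ) - (d : ℤ)) = (k : ℤ) := by push_cast; ring
      rw [this]
      funext x
      induction x using OnePoint.rec with
      | infty => simp [std_infty, std_coe, ext8, hk.ne']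
      | coe z => simp [std_infty, std_coe, ext8, hk.ne', hk]
    rw [e]
    refine hmt_pow _ _ (fun z => (z / ‖z‖) ^ k) hA (by fun_prop) d k hd hk
      (fun z hz => ?_) (fun z hz => ?_) (fun z hz => ?_)
    · rw [norm_pow, (conj_mul_unit z hz).2.2.2, one_pow]
    · have := (conj_mul_unit z hz).1
      rw [pow_add (z / (‖z‖ : ℂ)), ← mul_assoc ((starRingEnd ℂ) (z / ‖z‖) ^ d),
        ← mul_pow, this, one_pow, one_mul]
    · rw [← mul_pow, ← (conj_mul_unit z hz).2.1]

/-- **Theorem 2 (root-counting form).**  Let `R = f(z,z̄)/g(z,z̄)` with `f, g`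
polynomials in `z` and `z̄` without common zeros, `deg f ≥ deg g`, `d = deg f`, and
let `T` be the top homogeneous component of `f` (of degree `d`); assume
`|T(z,z̄)| → ∞` as `|z| → ∞`.  Let `R : ℂ̄ → ℂ̄` be the continuous map equal to `f/g`
where `g ≠ 0`, to `∞` where `g = 0`, and to `lim_{|z|→∞} f/g` at `∞` (this limit is
the value forced by continuity).  Then the degree of the map `R` equals the number of
roots of `T̃(z) = z^d · T(z, z⁻¹)` in the open unit disk, counted with multiplicity,
minus `d`. -/
theorem degree_eq_roots_in_disk_sub_d
    (f g : MvPolynomial (Fin 2) ℂ)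
    (hfg : ∀ z : ℂ, ¬(evalZZbar f z = 0 ∧ evalZZbar g z = 0))
    (hdeg : g.totalDegree ≤ f.totalDegree)
    (d : ℕ) (hd : d = f.totalDegree)
    (T : MvPolynomial (Fin 2) ℂ) (hT : T = MvPolynomial.homogeneousComponent d f)
    (hTinf : Tendsto (fun z : ℂ => ‖evalZZbar T z‖) (cocompact ℂ) atTop)
    (R : OnePoint ℂ → OnePoint ℂ) (hRcont : Continuous R)
    (hR₁ : ∀ z : ℂ, evalZZbar g z ≠ 0 →
      R z = ((evalZZbar f z / evalZZbar g z : ℂ) : OnePoint ℂ))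
    (hR₂ : ∀ z : ℂ, evalZZbar g z = 0 → R z = ∞)
    (Ttilde : Polynomial ℂ)
    (hTtilde : ∀ z : ℂ, z ≠ 0 →
      Ttilde.eval z = z ^ d * MvPolynomial.eval ![z, z⁻¹] T) :
    HasDegree R (((Ttilde.roots.filter fun z => ‖z‖ < 1).card : ℤ) - (d : ℤ)) := by
  have hTh : T.IsHomogeneous d := hT ▸ MvPolynomial.homogeneousComponent_isHomogeneous d f
  have hT0 := T_ne_zero T d hTh hTinf
  have hdpos : 0 < d := by
    rcases Nat.eq_zero_or_pos d with h | h
    · exfalso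
      have h1 : ∀ z, evalZZbar T z = evalZZbar T 0 := fun z => by
        have h2 := evalZZbar_hom T d hTh 0 z
        rw [h] at h2
        simpa using h2.symm
      simp only [h1] at hTinf
      exact not_tendsto_const_atTop _ _ hTinf
    · exact h
  have hsub : (f - T).totalDegree ≤ d - 1 := by
    rw [hT, hd]; exact sub_top f
  obtain ⟨m, hm, hasy⟩ := asymp T (f - T) d hdpos hTh hT0 hsub
  have hfT : ∀ z, evalZZbar f z = evalZZbar T z + evalZZbar (f - T) z := fun z => by
    simp [evalZZbar]
  have cf := (evalZZbar_contDiff f).continuous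
  have cg := (evalZZbar_contDiff g).continuous
  have cT := (evalZZbar_contDiff T).continuous
  obtain ⟨e, c, hc1, hgen⟩ := exists_generic f g
  have hc : c ≠ 0 := by rintro rfl; norm_num at hc1
  have hflow : ∀ᶠ z in cocompact ℂ, m * ‖z‖ ^ d ≤ ‖evalZZbar f z‖ := by
    filter_upwards [hasy 0] with z hz
    rw [hfT z]
    have := norm_sub_le_norm_add (evalZZbar T z) (evalZZbar (f - T) z)
    linarith
  have hmd : Tendsto (fun z : ℂ => m * ‖z‖ ^ d) (cocompact ℂ) atTop :=
    (((tendsto_pow_atTop hdpos.ne').comp norm_atTop).const_mul_atTop hm)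
  obtain ⟨C, hC, hCg⟩ := evalZZbar_bound g d (hd ▸ hdeg)
  have s1 : Hmt R (ext8 fun z => (evalZZbar f z + e) / c) := by
    refine step1 _ _ cf cg hfg e c hc hgen (tendsto_atTop_mono' _ hflow hmd) (C / m) ?_ R hRcont ?_
    · filter_upwards [hflow, norm_atTop.eventually_ge_atTop 1] with z h1 h2
      refine (hCg z h2).trans ?_
      rw [div_mul_eq_mul_div, le_div_iff₀ hm]
      nlinarith
    · intro z
      by_cases hg : evalZZbar g z = 0
      · simp [hR₂ z hg, mkS, hg]
      · simp [hR₁ z hg, mkS, hg]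
  obtain ⟨γ, hγ, g0, g1, hγ0⟩ := exists_path c⁻¹ (inv_ne_zero hc)
  have s2 : Hmt (ext8 fun z => (evalZZbar f z + e) / c)
      (ext8 fun z => evalZZbar f z + e) := by
    obtain ⟨t0, -, ht0⟩ := isCompact_univ.exists_isMinOn ⟨(0 : I), trivial⟩ hγ.norm.continuousOn
    have := hmt_ext (fun p => γ p.2 * (evalZZbar f p.1 + e)) (by fun_prop)
      (tendsto_lower _ (‖γ t0‖ * m) (mul_pos (norm_pos_iff.2 (hγ0 t0)) hm) d hdpos (by
        filter_upwards [hasy ‖e‖] with z hz t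
        have h1 : ‖γ t0‖ ≤ ‖γ t‖ := ht0 (Set.mem_univ t)
        have h2 : m * ‖z‖ ^ d ≤ ‖evalZZbar f z + e‖ := by
          rw [hfT z]
          have := norm_sub_le_norm_add (evalZZbar T z) (evalZZbar (f - T) z)
          have := norm_sub_le_norm_add (evalZZbar T z + evalZZbar (f - T) z) e
          linarith
        rw [norm_mul, mul_assoc]
        gcongr))
    simp only [g0, g1, one_mul] at this
    refine cong_hmt this ?_ rfl
    congr 1
    funext z
    rw [div_eq_inv_mul]
  have s3 : Hmt (ext8 fun z => evalZZbar f z + e) (ext8 fun z => evalZZbar T z) := by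
    have := hmt_ext (fun p => evalZZbar T p.1 +
        (1 - ((p.2 : ℝ) : ℂ)) * (evalZZbar f p.1 - evalZZbar T p.1 + e)) (by fun_prop)
      (tendsto_lower _ m hm d hdpos (by
        filter_upwards [hasy ‖e‖] with z hz t
        have ht : ‖(1 - ((t : ℝ) : ℂ))‖ ≤ 1 := by
          have : (1 - ((t : ℝ) : ℂ)) = ((1 - (t : ℝ) : ℝ) : ℂ) := by push_cast; rfl
          rw [this, Complex.norm_real, Real.norm_eq_abs, abs_le]
          constructor <;> linarith [t.2.1, t.2.2]
        rw [hfT z, add_sub_cancel_left]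
        have h1 := norm_sub_le_norm_add (evalZZbar T z)
          ((1 - ((t : ℝ) : ℂ)) * (evalZZbar (f - T) z + e))
        have h2 : ‖(1 - ((t : ℝ) : ℂ)) * (evalZZbar (f - T) z + e)‖ ≤
            ‖evalZZbar (f - T) z + e‖ := by
          rw [norm_mul]
          exact mul_le_of_le_one_left (norm_nonneg _) ht
        have h3 := norm_add_le (evalZZbar (f - T) z) e
        linarith))
    refine cong_hmt this ?_ ?_
    · congr 1
      funext z
      simp; ring
    · congr 1
      funext z
      simp
  have hunit : ∀ w : ℂ, ‖w‖ = 1 → Ttilde.eval w = w ^ d * evalZZbar T w := by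
    intro w hw
    have hw0 : w ≠ 0 := by rintro rfl; simp at hw
    rw [hTtilde w hw0, evalZZbar, ← Complex.inv_eq_conj hw]
  have hTt0 : Ttilde ≠ 0 := by
    rintro rfl
    have := hunit 1 (by simp)
    have h1 := hT0 1 one_ne_zero
    simp at this
    exact h1 this.symm
  have hroots : ∀ a ∈ Ttilde.roots, ‖a‖ ≠ 1 := by
    intro a ha h1
    have ha0 : a ≠ 0 := by rintro rfl; simp at h1
    have h2 := (Polynomial.mem_roots hTt0).1 ha
    rw [Polynomial.IsRoot, hunit a h1] at h2
    exact mul_ne_zero (pow_ne_zero _ ha0) (hT0 a ha0) h2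
  have hprod : ∀ w, Ttilde.eval w = Ttilde.leadingCoeff * (Ttilde.roots.map fun a => w - a).prod :=
    fun w => (IsAlgClosed.splits Ttilde).eval_eq_prod_roots w
  have s4 := step4 d hdpos Ttilde.roots hroots Ttilde.leadingCoeff
    (Polynomial.leadingCoeff_ne_zero.2 hTt0)
  have e4 : (fun z => evalZZbar T z) = fun z : ℂ => ((‖z‖ : ℂ)) ^ d *
      ((starRingEnd ℂ) (z / ‖z‖) ^ d *
        (Ttilde.leadingCoeff * (Ttilde.roots.map fun a => z / ‖z‖ - a).prod)) := by
    funext z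
    by_cases hz : z = 0
    · have := evalZZbar_hom T d hTh 0 0
      simp [hdpos.ne'] at this
      simp [hz, this, hdpos.ne']
    · obtain ⟨h1, h2, h3, h4⟩ := conj_mul_unit z hz
      rw [← hprod, hunit _ h4, ← mul_assoc ((starRingEnd ℂ) (z / ‖z‖) ^ d), ← mul_pow, h1, one_pow,
        one_mul, ← evalZZbar_hom T d hTh, ← h2]
  rw [← e4] at s4
  exact (((s1.trans s2).trans s3).trans s4).trans (step5 d _ hdpos)
end
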